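/- arXiv:2311.09203 — 3 statements merged into one kernel-verified Lean document; each statement's English description precedes it below -/
import Mathlib

section
/- Let 0<α<1 and β:=1/α. For all r>0 and all reals ρ, t, θ one has (|Q(e^{−(r+it)}, e^{ρ+iθ})| / Q(e^{−r}, e^ρ))² ≤ exp(−(2e^ρ/(1+e^ρ)²)·∑_{k≥1} g(k)·e^{−kr}·(1 − cos(θ − kt))). -/
open Real

/-- `g α k` is the number of positive integers `n` with `⌊n^α⌋ = k`. -/
noncomputable def g (α : ℝ) (k : ℕ) : ℕ :=
  Set.ncard {n : ℕ | 1 ≤ n ∧ ⌊(n : ℝ) ^ α⌋ = (k : ℤ)}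

/-- `Q(z,u) = ∏_{k≥1} (1 + u z^k)^{g(k)}` -/
noncomputable def Q (α : ℝ) (z u : ℂ) : ℂ :=
  ∏' k : ℕ, (1 + u * z ^ (k + 1)) ^ g α (k + 1)

lemma g_zero_aux (α : ℝ) (hα : 0 < α) : g α 0 = 0 := by
  unfold g
  have : {n : ℕ | 1 ≤ n ∧ ⌊(n : ℝ) ^ α⌋ = ((0 : ℕ) : ℤ)} = ∅ := by
    ext n
    simp only [Set.mem_setOf_eq, Set.mem_empty_iff_false, iff_false, not_and]
    intro hn h
    have h1 : (1 : ℝ) ≤ (n : ℝ) ^ α :=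
      Real.one_le_rpow (by exact_mod_cast hn) hα.le
    have h2 : (1 : ℤ) ≤ ⌊(n : ℝ) ^ α⌋ := Int.le_floor.mpr (by exact_mod_cast h1)
    rw [h] at h2
    norm_num at h2
  rw [this, Set.ncard_empty]

lemma g_le_aux (α : ℝ) (hα : 0 < α) (k : ℕ) :
    (g α k : ℝ) ≤ ((k : ℝ) + 1) ^ (⌈1 / α⌉₊) := by
  have hk : (1 : ℝ) ≤ (k : ℝ) + 1 := by linarith [(Nat.cast_nonneg k : (0 : ℝ) ≤ k)]
  have h1 : g α k ≤ ⌊((k : ℝ) + 1) ^ (1 / α)⌋₊ := by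
    unfold g
    have hsub : {n : ℕ | 1 ≤ n ∧ ⌊(n : ℝ) ^ α⌋ = (k : ℤ)} ⊆
        ((Finset.Icc 1 ⌊((k : ℝ) + 1) ^ (1 / α)⌋₊ : Finset ℕ) : Set ℕ) := by
      rintro n ⟨hn, h⟩
      simp only [Finset.coe_Icc, Set.mem_Icc]
      refine ⟨hn, Nat.le_floor ?_⟩
      have h2 : (n : ℝ) ^ α < (k : ℝ) + 1 := by
        have := Int.lt_floor_add_one ((n : ℝ) ^ α)
        rw [h] at this
        exact_mod_cast this
      have h3 : ((n : ℝ) ^ α) ^ (1 / α) ≤ ((k : ℝ) + 1) ^ (1 / α) :=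
        Real.rpow_le_rpow (by positivity) h2.le (by positivity)
      rwa [← Real.rpow_mul (by positivity), mul_one_div_cancel hα.ne', Real.rpow_one] at h3
    have := Set.ncard_le_ncard hsub (Finset.finite_toSet _)
    rw [Set.ncard_coe_finset] at this
    simpa using this
  calc (g α k : ℝ) ≤ (⌊((k : ℝ) + 1) ^ (1 / α)⌋₊ : ℝ) := by exact_mod_cast h1
    _ ≤ ((k : ℝ) + 1) ^ (1 / α) := Nat.floor_le (by positivity)
    _ ≤ ((k : ℝ) + 1) ^ ((⌈1 / α⌉₊ : ℕ) : ℝ) :=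
        Real.rpow_le_rpow_of_exponent_le hk (Nat.le_ceil _)
    _ = _ := Real.rpow_natCast _ _

lemma summable_g_aux (α : ℝ) (hα : 0 < α) (r : ℝ) (hr : 0 < r) :
    Summable (fun k : ℕ => (g α k : ℝ) * Real.exp (-(k : ℝ) * r)) := by
  have h0 : ‖Real.exp (-r)‖ < 1 := by
    rw [Real.norm_eq_abs, abs_of_pos (Real.exp_pos _)]
    simpa using hr
  have h1 := summable_pow_mul_geometric_of_norm_lt_one (⌈1 / α⌉₊) h0
  have h2 := ((summable_nat_add_iff 1).mpr h1).mul_left (Real.exp r)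
  refine Summable.of_nonneg_of_le (fun k => by positivity) (fun k => ?_) h2
  have e : Real.exp r * ((((k + 1 : ℕ) : ℝ)) ^ ⌈1 / α⌉₊ * Real.exp (-r) ^ (k + 1))
      = ((k : ℝ) + 1) ^ ⌈1 / α⌉₊ * Real.exp (-(k : ℝ) * r) := by
    have : Real.exp r * Real.exp (-r) ^ (k + 1) = Real.exp (-(k : ℝ) * r) := by
      rw [← Real.exp_nat_mul, ← Real.exp_add]
      congr 1
      push_cast
      ring
    rw [← this]
    push_cast
    ring
  rw [e]
  exact mul_le_mul_of_nonneg_right (g_le_aux α hα k) (Real.exp_pos _).le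

lemma pow_sub_one_aux (a : ℂ) (n : ℕ) : ‖(1 + a) ^ n - 1‖ ≤ (1 + ‖a‖) ^ n - 1 := by
  induction n with
  | zero => simp
  | succ n ih =>
    have e : (1 + a) ^ (n + 1) - 1 = ((1 + a) ^ n - 1) * (1 + a) + a := by ring
    have h1 : ‖1 + a‖ ≤ 1 + ‖a‖ := by simpa using norm_add_le 1 a
    rw [e]
    calc _ ≤ ‖(1 + a) ^ n - 1‖ * ‖1 + a‖ + ‖a‖ := by
            rw [← norm_mul]; exact norm_add_le _ _
      _ ≤ ((1 + ‖a‖) ^ n - 1) * (1 + ‖a‖) + ‖a‖ := by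
            gcongr
            exact (norm_nonneg _).trans ih
      _ = _ := by ring

lemma multipliable_aux (a : ℕ → ℂ) (m : ℕ → ℕ) (h : Summable fun k => (m k : ℝ) * ‖a k‖) :
    Multipliable fun k => (1 + a k) ^ m k := by
  have h1 : Summable fun k => ‖(1 + a k) ^ m k - 1‖ := by
    have hM : ∀ k, (m k : ℝ) * ‖a k‖ ≤ ∑' k, (m k : ℝ) * ‖a k‖ := fun k =>
      h.le_tsum k (fun j _ => by positivity)
    refine Summable.of_nonneg_of_le (fun k => norm_nonneg _) (fun k => ?_)
      (h.mul_right (Real.exp (∑' k, (m k : ℝ) * ‖a k‖)))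
    have hs : 0 ≤ (m k : ℝ) * ‖a k‖ := by positivity
    set s := (m k : ℝ) * ‖a k‖ with hsdef
    have h2 : (1 + ‖a k‖) ^ m k ≤ Real.exp s := by
      rw [hsdef, Real.exp_nat_mul]
      gcongr
      linarith [Real.add_one_le_exp ‖a k‖]
    have h3 : Real.exp s - 1 ≤ s * Real.exp s := by
      have := Real.add_one_le_exp (-s)
      have h4 : Real.exp (-s) * Real.exp s = 1 := by rw [← Real.exp_add]; simp
      nlinarith [Real.exp_pos s]
    have h5 : s * Real.exp s ≤ s * Real.exp (∑' k, (m k : ℝ) * ‖a k‖) :=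
      mul_le_mul_of_nonneg_left (Real.exp_le_exp.mpr (hM k)) hs
    linarith [pow_sub_one_aux (a k) (m k)]
  have := multipliable_one_add_of_summable h1
  simpa using this

lemma factor_aux (ρ y φ : ℝ) (hy0 : 0 < y) (hy : y ≤ 1) (w : ℂ)
    (hw : w = ((Real.exp ρ * y : ℝ) : ℂ) * Complex.exp ((φ : ℂ) * Complex.I)) :
    ‖1 + w‖ ^ 2 ≤ ‖1 + ((Real.exp ρ * y : ℝ) : ℂ)‖ ^ 2 *
      Real.exp (-(2 * Real.exp ρ / (1 + Real.exp ρ) ^ 2) * (y * (1 - Real.cos φ))) := by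
  have hE := Real.exp_pos ρ
  set E := Real.exp ρ
  have hx : 0 < E * y := by positivity
  have n1 : ‖1 + w‖ ^ 2 = (1 + E * y) ^ 2 - 2 * (E * y) * (1 - Real.cos φ) := by
    rw [← Complex.normSq_eq_norm_sq, Complex.normSq_apply, hw]
    simp only [Complex.add_re, Complex.add_im, Complex.one_re, Complex.one_im,
      Complex.re_ofReal_mul, Complex.im_ofReal_mul, Complex.exp_ofReal_mul_I_re,
      Complex.exp_ofReal_mul_I_im]
    nlinarith [Real.sin_sq_add_cos_sq φ]
  have n2 : ‖1 + ((E * y : ℝ) : ℂ)‖ = 1 + E * y := by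
    rw [← Complex.ofReal_one, ← Complex.ofReal_add, Complex.norm_real, Real.norm_eq_abs,
      abs_of_pos (by positivity)]
  rw [n1, n2]
  have hc : 0 ≤ 1 - Real.cos φ := by linarith [Real.cos_le_one φ]
  have h1 := Real.add_one_le_exp (-(2 * E / (1 + E) ^ 2) * (y * (1 - Real.cos φ)))
  have h2 : (1 + E * y) ^ 2 ≤ (1 + E) ^ 2 := by
    gcongr
    nlinarith
  have h3 : (1 + E * y) ^ 2 * (2 * E / (1 + E) ^ 2 * (y * (1 - Real.cos φ)))
      ≤ 2 * (E * y) * (1 - Real.cos φ) := by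
    have h4 : (1 + E * y) ^ 2 / (1 + E) ^ 2 ≤ 1 := (div_le_one (by positivity)).mpr h2
    calc _ = (1 + E * y) ^ 2 / (1 + E) ^ 2 * (2 * (E * y) * (1 - Real.cos φ)) := by ring
      _ ≤ 1 * (2 * (E * y) * (1 - Real.cos φ)) := by gcongr
      _ = _ := one_mul _
  have h5 := mul_le_mul_of_nonneg_left h1 (sq_nonneg (1 + E * y))
  linarith

/-- Basic estimate:
`(|Q(e^{−(r+it)}, e^{ρ+iθ})|/Q(e^{−r}, e^ρ))² ≤ exp(−(2e^ρ/(1+e^ρ)²)·∑_{k≥1} g(k) e^{−kr}(1−cos(θ−kt)))`. -/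
theorem Q_ratio_sq_bound (α β : ℝ) (hα : 0 < α ∧ α < 1) (hβ : β = 1 / α)
    (r ρ t θ : ℝ) (hr : 0 < r) :
    (‖Q α (Complex.exp (-(r : ℂ) - (t : ℂ) * Complex.I))
        (Complex.exp ((ρ : ℂ) + (θ : ℂ) * Complex.I))‖
      / ‖Q α (Complex.exp (-(r : ℂ))) (Complex.exp (ρ : ℂ))‖) ^ 2
    ≤ Real.exp (-(2 * Real.exp ρ / (1 + Real.exp ρ) ^ 2)
        * ∑' k : ℕ, (g α k : ℝ) * Real.exp (-(k : ℝ) * r) * (1 - Real.cos (θ - k * t))) := by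
  have hS := summable_g_aux α hα.1 r hr
  have hT : Summable (fun k : ℕ => (g α k : ℝ) * Real.exp (-(k : ℝ) * r)
      * (1 - Real.cos (θ - k * t))) := by
    refine Summable.of_nonneg_of_le (fun k => ?_) (fun k => ?_) (hS.mul_right 2)
    · have := Real.cos_le_one (θ - k * t)
      exact mul_nonneg (by positivity) (by linarith)
    · have := Real.neg_one_le_cos (θ - k * t)
      exact mul_le_mul_of_nonneg_left (by linarith) (by positivity)
  rw [hT.tsum_eq_zero_add]
  simp only [g_zero_aux α hα.1, Nat.cast_zero, zero_mul, zero_add]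
  have hT1 := (summable_nat_add_iff 1).mpr hT
  have hS1 := (summable_nat_add_iff 1).mpr hS
  -- rewriting of the terms
  have e1 : ∀ k : ℕ, Complex.exp ((ρ : ℂ) + (θ : ℂ) * Complex.I) *
      Complex.exp (-(r : ℂ) - (t : ℂ) * Complex.I) ^ (k + 1) =
      ((Real.exp ρ * Real.exp (-((k + 1 : ℕ) : ℝ) * r) : ℝ) : ℂ) *
        Complex.exp (((θ - ((k + 1 : ℕ) : ℝ) * t : ℝ) : ℂ) * Complex.I) := by
    intro k
    rw [← Complex.exp_nat_mul, ← Complex.exp_add, ← Real.exp_add, Complex.ofReal_exp,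
      ← Complex.exp_add]
    congr 1
    push_cast
    ring
  have e2 : ∀ k : ℕ, Complex.exp (ρ : ℂ) * Complex.exp (-(r : ℂ)) ^ (k + 1) =
      ((Real.exp ρ * Real.exp (-((k + 1 : ℕ) : ℝ) * r) : ℝ) : ℂ) := by
    intro k
    rw [← Complex.exp_nat_mul, ← Complex.exp_add, ← Real.exp_add, Complex.ofReal_exp]
    congr 1
    push_cast
    ring
  have hm1 : Multipliable fun k : ℕ => (1 + Complex.exp ((ρ : ℂ) + (θ : ℂ) * Complex.I) *
      Complex.exp (-(r : ℂ) - (t : ℂ) * Complex.I) ^ (k + 1)) ^ g α (k + 1) := by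
    apply multipliable_aux
    refine (hS1.mul_left (Real.exp ρ)).congr fun k => ?_
    rw [e1, norm_mul, Complex.norm_exp_ofReal_mul_I, Complex.norm_real, Real.norm_eq_abs,
      abs_of_pos (by positivity)]
    ring
  have hm2 : Multipliable fun k : ℕ => (1 + Complex.exp (ρ : ℂ) *
      Complex.exp (-(r : ℂ)) ^ (k + 1)) ^ g α (k + 1) := by
    apply multipliable_aux
    refine (hS1.mul_left (Real.exp ρ)).congr fun k => ?_
    rw [e2, Complex.norm_real, Real.norm_eq_abs, abs_of_pos (by positivity)]
    ring
  have t1 := (hm1.hasProd.tendsto_prod_nat.norm).pow 2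
  have t2 := (hm2.hasProd.tendsto_prod_nat.norm).pow 2
  have t3 := (Real.continuous_exp.tendsto _).comp (hT1.hasSum.tendsto_sum_nat.const_mul
    (-(2 * Real.exp ρ / (1 + Real.exp ρ) ^ 2)))
  have key := le_of_tendsto_of_tendsto' t1 (t2.mul t3) (fun n => ?_)
  · rw [div_pow]
    refine div_le_of_le_mul₀ (by positivity) (Real.exp_pos _).le ?_
    rw [mul_comm (Real.exp _)]
    exact key
  · simp only [Function.comp]
    rw [norm_prod, norm_prod, ← Finset.prod_pow, ← Finset.prod_pow, Finset.mul_sum,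
      Real.exp_sum, ← Finset.prod_mul_distrib]
    refine Finset.prod_le_prod (fun k _ => by positivity) (fun k _ => ?_)
    have hf := factor_aux ρ (Real.exp (-((k + 1 : ℕ) : ℝ) * r)) (θ - ((k + 1 : ℕ) : ℝ) * t)
      (Real.exp_pos _) (Real.exp_le_one_iff.mpr (by
        have : 0 ≤ ((k + 1 : ℕ) : ℝ) * r := by positivity
        linarith)) _ (e1 k)
    rw [← e2 k] at hf
    have hp := pow_le_pow_left₀ (by positivity) hf (g α (k + 1))
    rw [mul_pow, ← Real.exp_nat_mul] at hp
    rw [norm_pow, norm_pow, ← pow_mul, ← pow_mul, mul_comm (g α (k + 1)) 2, pow_mul, pow_mul]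
    refine hp.trans (le_of_eq ?_)
    congr 2
    ring
end

section
/- Let 0<α<1 and β:=1/α. For each n let r=r_n>0 be the unique positive real with n = ∑_{k≥1} k·g(k)/(e^{kr}+1), and set B² = f''_{20}(r,0). Then there is a constant C>0 such that for all sufficiently large n, the number q(n) of restricted α-partitions of n satisfies q(n) = (e^{n·r+f(r,0)}/(√(2π)·B))·(1+E) with |E| ≤ C·r^{2β/7}. -/
open Real

/-- `qn α n`: total number of restricted α-partitions of `n`. -/
noncomputable def qn (α : ℝ) (n : ℕ) : ℕ :=
  Set.ncard {A : Finset ℕ | (∀ a ∈ A, 1 ≤ a) ∧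
    (∑ a ∈ A, ⌊(a : ℝ) ^ α⌋) = (n : ℤ)}

/-- `f(τ,σ) = ∑_{k≥1} g(k) log(1 + e^{σ−kτ})` -/
noncomputable def f (α : ℝ) (τ σ : ℝ) : ℝ :=
  ∑' k : ℕ, (g α k : ℝ) * Real.log (1 + Real.exp (σ - k * τ))

/-- the mixed partial derivative `∂^{p+q} f/∂τ^p∂σ^q` -/
noncomputable def fpartial (α : ℝ) (p q : ℕ) (τ σ : ℝ) : ℝ :=
  iteratedDeriv p (fun τ' : ℝ => iteratedDeriv q
    (fun σ' : ℝ => ∑' k : ℕ, (g α k : ℝ) * Real.log (1 + Real.exp (σ' - k * τ'))) σ) τ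



/-! ### Elementary estimates -/

lemma exp_I_taylor (y : ℝ) :
    ‖Complex.exp (y * Complex.I) - (1 + y * Complex.I - (y : ℂ) ^ 2 / 2)‖ ≤ 2 * |y| ^ 3 := by
  have h1 : Complex.exp (y * Complex.I) - (1 + y * Complex.I - (y : ℂ) ^ 2 / 2)
      = ((Real.cos y - 1 + y ^ 2 / 2 : ℝ) : ℂ) + ((Real.sin y - y : ℝ) : ℂ) * Complex.I := by
    rw [Complex.exp_mul_I]; push_cast; ring
  rw [h1]
  have hs : |Real.sin y - y| ≤ |y| ^ 3 / 6 := by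
    rw [abs_sub_comm]; exact Real.abs_sub_sin_le y
  have hc : |Real.cos y - 1 + y ^ 2 / 2| ≤ |y| ^ 3 := by
    have hlow := Real.one_sub_sq_div_two_le_cos (x := y)
    rw [abs_of_nonneg (by linarith)]
    have ha : 0 ≤ |y| := abs_nonneg y
    rcases le_total |y| 1 with h | h
    · have e1 : Real.cos y = 1 - 2 * Real.sin (y / 2) ^ 2 := by
        have := Real.cos_sq (y / 2)
        have h3 := Real.sin_sq_add_cos_sq (y / 2)
        rw [show 2 * (y / 2) = y by ring] at this
        linarith
      have h2 := Real.abs_sub_sin_le (y / 2)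
      have h3 : |y / 2 + Real.sin (y / 2)| ≤ |y| := by
        refine (abs_add_le _ _).trans ?_
        have := Real.abs_sin_le_abs (x := y / 2)
        have h4 : |y / 2| = |y| / 2 := by rw [abs_div]; norm_num
        rw [h4] at this ⊢; linarith
      have h5 : Real.cos y - 1 + y ^ 2 / 2
          = 2 * ((y / 2 - Real.sin (y / 2)) * (y / 2 + Real.sin (y / 2))) := by
        rw [e1]; ring
      have h6 : (y / 2 - Real.sin (y / 2)) * (y / 2 + Real.sin (y / 2))
          ≤ |y / 2| ^ 3 / 6 * |y| := by
        refine (le_abs_self _).trans ?_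
        rw [abs_mul]
        gcongr
      have h4 : |y / 2| = |y| / 2 := by rw [abs_div]; norm_num
      rw [h5]
      rw [h4] at h6
      have h7 : |y| ^ 3 * |y| ≤ |y| ^ 3 * 1 := by gcongr
      nlinarith [pow_nonneg ha 3]
    · have := Real.cos_le_one y
      have h2 : y ^ 2 = |y| ^ 2 := (sq_abs y).symm
      rw [h2]
      nlinarith [sq_nonneg |y|]
  refine (norm_add_le _ _).trans ?_
  rw [norm_mul, Complex.norm_I, mul_one, Complex.norm_real, Complex.norm_real, Real.norm_eq_abs,
    Real.norm_eq_abs]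
  have : 0 ≤ |y| ^ 3 := by positivity
  linarith

lemma char_norm (p x : ℝ) :
    ‖(1 - p : ℂ) + p * Complex.exp (-(x * Complex.I))‖
      ≤ Real.exp (-(p * (1 - p) * (1 - Real.cos x))) := by
  have h1 : (1 - p : ℂ) + p * Complex.exp (-(x * Complex.I))
      = ((1 - p + p * Real.cos x : ℝ) : ℂ) + ((-(p * Real.sin x) : ℝ) : ℂ) * Complex.I := by
    rw [← neg_mul, Complex.exp_mul_I, Complex.cos_neg, Complex.sin_neg]; push_cast; ring
  have h2 : ‖(1 - p : ℂ) + p * Complex.exp (-(x * Complex.I))‖ ^ 2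
      = 1 - 2 * (p * (1 - p) * (1 - Real.cos x)) := by
    rw [h1, ← Complex.normSq_eq_norm_sq, Complex.normSq_add_mul_I]
    have := Real.sin_sq_add_cos_sq x
    linear_combination p ^ 2 * this
  refine (pow_le_pow_iff_left₀ (norm_nonneg _) (Real.exp_pos _).le two_ne_zero).1 ?_
  rw [h2, ← Real.exp_nat_mul]
  have := Real.add_one_le_exp (((2 : ℕ) : ℝ) * -(p * (1 - p) * (1 - Real.cos x)))
  push_cast at this ⊢
  linarith

lemma exp_neg_quad {y : ℝ} (hy : 0 ≤ y) : |Real.exp (-y) - (1 - y)| ≤ y ^ 2 / 2 := by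
  have h1 := Real.add_one_le_exp (-y)
  rw [abs_of_nonneg (by linarith)]
  have h2 := Real.quadratic_le_exp_of_nonneg hy
  have h3 : Real.exp (-y) * Real.exp y = 1 := by rw [← Real.exp_add]; simp
  have h4 : Real.exp (-y) * (1 + y + y ^ 2 / 2) ≤ 1 := by
    refine le_trans ?_ h3.le
    gcongr
  have h5 : 1 ≤ (1 - y + y ^ 2 / 2) * (1 + y + y ^ 2 / 2) := by nlinarith [sq_nonneg (y ^ 2)]
  have h6 : 0 < 1 + y + y ^ 2 / 2 := by positivity
  have := le_of_mul_le_mul_right (h4.trans h5) h6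
  linarith

lemma char_taylor (p x : ℝ) (hp0 : 0 ≤ p) (hp1 : p ≤ 1) (hpx : p * |x| ≤ 1) :
    ‖((1 - p : ℂ) + p * Complex.exp (-(x * Complex.I))) * Complex.exp (p * x * Complex.I)
      - (Real.exp (-(p * (1 - p) * x ^ 2 / 2)) : ℝ)‖ ≤ 3 * p * |x| ^ 3 := by
  have hx : 0 ≤ |x| := abs_nonneg x
  have hq : 0 ≤ 1 - p := by linarith
  have e1 := exp_I_taylor (p * x)
  have e2 := exp_I_taylor (-((1 - p) * x))
  have e3 := exp_neg_quad (y := p * (1 - p) * x ^ 2 / 2) (by positivity)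
  have key : ((1 - p : ℂ) + p * Complex.exp (-(x * Complex.I))) * Complex.exp (p * x * Complex.I)
      - (Real.exp (-(p * (1 - p) * x ^ 2 / 2)) : ℝ)
      = ((1 - p : ℝ) : ℂ) * (Complex.exp ((p * x : ℝ) * Complex.I)
          - (1 + (p * x : ℝ) * Complex.I - ((p * x : ℝ) : ℂ) ^ 2 / 2))
        + (p : ℂ) * (Complex.exp ((-((1 - p) * x) : ℝ) * Complex.I)
          - (1 + (-((1 - p) * x) : ℝ) * Complex.I - ((-((1 - p) * x) : ℝ) : ℂ) ^ 2 / 2))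
        - ((Real.exp (-(p * (1 - p) * x ^ 2 / 2)) - (1 - p * (1 - p) * x ^ 2 / 2) : ℝ) : ℂ) := by
    have : Complex.exp ((-((1 - p) * x) : ℝ) * Complex.I)
        = Complex.exp (-(x * Complex.I)) * Complex.exp (p * x * Complex.I) := by
      rw [← Complex.exp_add]; congr 1; push_cast; ring
    rw [this]
    push_cast
    linear_combination
  rw [key]
  refine (norm_sub_le _ _).trans ?_
  have n1 : ‖((1 - p : ℝ) : ℂ) * (Complex.exp ((p * x : ℝ) * Complex.I)
          - (1 + (p * x : ℝ) * Complex.I - ((p * x : ℝ) : ℂ) ^ 2 / 2))‖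
      ≤ (1 - p) * (2 * (p * |x|) ^ 3) := by
    rw [norm_mul, Complex.norm_real, Real.norm_of_nonneg hq]
    rw [abs_mul, abs_of_nonneg hp0] at e1
    gcongr
  have n2 : ‖(p : ℂ) * (Complex.exp ((-((1 - p) * x) : ℝ) * Complex.I)
          - (1 + (-((1 - p) * x) : ℝ) * Complex.I - ((-((1 - p) * x) : ℝ) : ℂ) ^ 2 / 2))‖
      ≤ p * (2 * ((1 - p) * |x|) ^ 3) := by
    rw [norm_mul, Complex.norm_real, Real.norm_of_nonneg hp0]
    rw [abs_neg, abs_mul, abs_of_nonneg hq] at e2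
    gcongr
  have n3 : ‖((Real.exp (-(p * (1 - p) * x ^ 2 / 2)) - (1 - p * (1 - p) * x ^ 2 / 2) : ℝ) : ℂ)‖
      ≤ p * |x| ^ 3 := by
    rw [Complex.norm_real, Real.norm_eq_abs]
    refine e3.trans ?_
    rw [← sq_abs x]
    have : (p * (1 - p) * |x| ^ 2 / 2) ^ 2 / 2 = (1 - p) ^ 2 * (p * |x|) * (p * |x| ^ 3) / 8 := by
      ring
    rw [this]
    have h1 : (1 - p) ^ 2 ≤ 1 := by nlinarith
    have h2 : (1 - p) ^ 2 * (p * |x|) ≤ 1 * 1 := by gcongr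
    have h3 : 0 ≤ p * |x| ^ 3 := by positivity
    nlinarith
  refine (add_le_add ((norm_add_le _ _).trans (add_le_add n1 n2)) n3).trans ?_
  have h3 : 0 ≤ p * |x| ^ 3 := by positivity
  have : (1 - p) * p ^ 2 + (1 - p) ^ 3 ≤ 1 := by
    nlinarith [mul_nonneg hp0 hq, mul_nonneg (mul_nonneg hp0 hq) hp0]
  have h4 := mul_le_mul_of_nonneg_right this h3
  nlinarith

lemma prod_sub_prod_le {ι : Type*} (S : Finset ι) (a b : ι → ℂ) (c : ι → ℝ) (D : ℝ)
    (hc : ∀ i, 0 ≤ c i) (hD : ∀ i, 1 ≤ D * c i)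
    (ha : ∀ i, ‖a i‖ ≤ c i) (hb : ∀ i, ‖b i‖ ≤ c i) :
    ‖∏ i ∈ S, a i - ∏ i ∈ S, b i‖ ≤ (∏ i ∈ S, c i) * (D * ∑ i ∈ S, ‖a i - b i‖) := by
  classical
  induction S using Finset.induction_on with
  | empty => simp
  | insert i S hi ih =>
    rw [Finset.prod_insert hi, Finset.prod_insert hi, Finset.prod_insert hi, Finset.sum_insert hi]
    have e : a i * ∏ j ∈ S, a j - b i * ∏ j ∈ S, b j
        = (a i - b i) * ∏ j ∈ S, a j + b i * (∏ j ∈ S, a j - ∏ j ∈ S, b j) := by ring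
    rw [e]
    refine (norm_add_le _ _).trans ?_
    rw [norm_mul, norm_mul]
    have hP : ‖∏ j ∈ S, a j‖ ≤ ∏ j ∈ S, c j := by
      rw [norm_prod]
      exact Finset.prod_le_prod (fun _ _ => norm_nonneg _) (fun j _ => ha j)
    have hPc : 0 ≤ ∏ j ∈ S, c j := Finset.prod_nonneg (fun j _ => hc j)
    have h1 : ‖a i - b i‖ * ‖∏ j ∈ S, a j‖
        ≤ (D * c i) * (‖a i - b i‖ * ∏ j ∈ S, c j) := by
      have h0 : ‖a i - b i‖ * ‖∏ j ∈ S, a j‖ ≤ ‖a i - b i‖ * ∏ j ∈ S, c j := by gcongr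
      have h2 : 0 ≤ ‖a i - b i‖ * ∏ j ∈ S, c j := by positivity
      nlinarith [hD i]
    have h2 : ‖b i‖ * ‖∏ j ∈ S, a j - ∏ j ∈ S, b j‖
        ≤ c i * ((∏ j ∈ S, c j) * (D * ∑ j ∈ S, ‖a j - b j‖)) := by
      have := hc i
      exact mul_le_mul (hb i) ih (norm_nonneg _) (hc i)
    calc _ ≤ _ := add_le_add h1 h2
      _ = _ := by ring

lemma rpow_le_exp (s : ℝ) (hs : 0 ≤ s) : ∃ C > (0 : ℝ), ∀ y : ℝ, 0 ≤ y → y ^ s ≤ C * Real.exp y := by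
  obtain ⟨k, hk⟩ := exists_nat_ge s
  refine ⟨1 + (k.factorial : ℝ), by positivity, fun y hy => ?_⟩
  have h1 : y ^ s ≤ 1 + y ^ k := by
    rcases le_total y 1 with h | h
    · have := Real.rpow_le_one hy h hs
      have : 0 ≤ y ^ k := by positivity
      linarith
    · have := Real.rpow_le_rpow_of_exponent_le h hk
      rw [Real.rpow_natCast] at this
      linarith
  have h2 := Real.pow_div_factorial_le_exp y hy k
  rw [div_le_iff₀ (by positivity)] at h2
  have h3 := Real.one_le_exp hy
  nlinarith

lemma sum_tele (ρ : ℝ) (hρ : 0 < ρ) (N : ℕ) :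
    ∑ b ∈ Finset.range N, 1 / (1 + ((b : ℝ) + 1) * ρ) ^ 2 ≤ 1 / ρ := by
  have h : ∀ N : ℕ, ∑ b ∈ Finset.range N, 1 / (1 + ((b : ℝ) + 1) * ρ) ^ 2
      ≤ 1 / ρ * (1 - 1 / (1 + (N : ℝ) * ρ)) := by
    intro N
    induction N with
    | zero => simp
    | succ N ih =>
      rw [Finset.sum_range_succ]
      refine (add_le_add_left ih _).trans ?_
      have h0 : 0 < 1 + (N : ℝ) * ρ := by positivity
      have h1 : 0 < 1 + ((N : ℝ) + 1) * ρ := by positivity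
      have h2 : 1 / (1 + ((N : ℝ) + 1) * ρ) ^ 2
          ≤ 1 / ((1 + (N : ℝ) * ρ) * (1 + ((N : ℝ) + 1) * ρ)) := by
        apply one_div_le_one_div_of_le (by positivity)
        rw [sq]
        gcongr
        linarith
      have h3 : 1 / ((1 + (N : ℝ) * ρ) * (1 + ((N : ℝ) + 1) * ρ))
          = 1 / ρ * (1 / (1 + (N : ℝ) * ρ) - 1 / (1 + ((N : ℝ) + 1) * ρ)) := by
        field_simp
        ring
      push_cast
      rw [h3] at h2
      linarith
  refine (h N).trans ?_
  have : 0 ≤ 1 / (1 + (N : ℝ) * ρ) := by positivity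
  have h2 : 0 < 1 / ρ := by positivity
  nlinarith

lemma sum_cos_le (θ : ℝ) (h0 : 0 < θ) (hπ : θ ≤ π) (K : ℕ) :
    ∑ k ∈ Finset.range K, Real.cos (((k : ℝ) + 1) * θ) ≤ 2 / θ := by
  have h : ∀ K : ℕ, 2 * Real.sin (θ / 2) * ∑ k ∈ Finset.range K, Real.cos (((k : ℝ) + 1) * θ)
      = Real.sin (((K : ℝ) + 1 / 2) * θ) - Real.sin (θ / 2) := by
    intro K
    induction K with
    | zero => simp; ring_nf
    | succ K ih =>
      rw [Finset.sum_range_succ, mul_add, ih]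
      have e1 : (((K + 1 : ℕ) : ℝ) + 1 / 2) * θ = ((K : ℝ) + 1) * θ + θ / 2 := by push_cast; ring
      have e2 : ((K : ℝ) + 1 / 2) * θ = ((K : ℝ) + 1) * θ - θ / 2 := by ring
      rw [e1, e2, Real.sin_add, Real.sin_sub]
      ring
  have hs : 2 / π * (θ / 2) ≤ Real.sin (θ / 2) :=
    Real.mul_le_sin (by linarith) (by linarith)
  have hπ0 := Real.pi_pos
  have hs2 : θ / 4 ≤ Real.sin (θ / 2) := by
    refine le_trans ?_ hs
    rw [div_mul_div_comm, div_le_div_iff₀ (by norm_num) (by positivity)]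
    nlinarith [Real.pi_le_four]
  have hs0 : 0 < Real.sin (θ / 2) := by linarith
  have h1 := h K
  have h2 := Real.sin_le_one (((K : ℝ) + 1 / 2) * θ)
  rw [le_div_iff₀ h0]
  set X := ∑ k ∈ Finset.range K, Real.cos (((k : ℝ) + 1) * θ)
  rcases le_total X 0 with hX | hX
  · nlinarith
  · nlinarith


/-! ### The sequence of parts -/

/-- The `b`-th part, `⌊(b+1)^α⌋`. -/
noncomputable def mm (α : ℝ) (b : ℕ) : ℕ := ⌊((b : ℝ) + 1) ^ α⌋₊

lemma mm_le (α : ℝ) (b : ℕ) : (mm α b : ℝ) ≤ ((b : ℝ) + 1) ^ α :=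
  Nat.floor_le (by positivity)

lemma mm_pos {α : ℝ} (hα : 0 < α) (b : ℕ) : 1 ≤ mm α b := by
  unfold mm
  rw [Nat.one_le_floor_iff]
  exact Real.one_le_rpow (by have : (0 : ℝ) ≤ b := by positivity
                             linarith) hα.le

lemma le_mm {α : ℝ} (hα : 0 < α) (b : ℕ) : ((b : ℝ) + 1) ^ α ≤ 2 * mm α b := by
  have h1 : ((b : ℝ) + 1) ^ α < mm α b + 1 := Nat.lt_floor_add_one _
  have h2 : (1 : ℝ) ≤ mm α b := by exact_mod_cast mm_pos hα b
  linarith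

lemma mm_surj {α : ℝ} (hα : 0 < α) (hα1 : α < 1) (k : ℕ) (hk : 1 ≤ k) : ∃ b, mm α b = k := by
  have hk0 : (0 : ℝ) < k := by exact_mod_cast hk
  have hβ : 1 ≤ 1 / α := by rw [le_div_iff₀ hα]; linarith
  set x : ℝ := (k : ℝ) ^ (1 / α) with hx
  have hx1 : 0 < x := by positivity
  have hc : 0 < ⌈x⌉₊ := Nat.ceil_pos.2 hx1
  refine ⟨⌈x⌉₊ - 1, ?_⟩
  unfold mm
  have e : (((⌈x⌉₊ - 1 : ℕ) : ℝ) + 1) = ⌈x⌉₊ := by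
    rw [Nat.cast_sub hc]; simp
  rw [e, Nat.floor_eq_iff (by positivity)]
  constructor
  · have h1 : x ≤ ⌈x⌉₊ := Nat.le_ceil x
    have h2 : x ^ α ≤ (⌈x⌉₊ : ℝ) ^ α := Real.rpow_le_rpow hx1.le h1 hα.le
    rwa [hx, ← Real.rpow_mul hk0.le, one_div_mul_cancel hα.ne', Real.rpow_one] at h2
  · have h1 : (⌈x⌉₊ : ℝ) < x + 1 := Nat.ceil_lt_add_one hx1.le
    have h2 : x + 1 ≤ ((k : ℝ) + 1) ^ (1 / α) := by
      have := Real.add_rpow_le_rpow_add hk0.le zero_le_one hβ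
      rwa [Real.one_rpow] at this
    have h3 : (⌈x⌉₊ : ℝ) ^ α < (((k : ℝ) + 1) ^ (1 / α)) ^ α :=
      Real.rpow_lt_rpow (by positivity) (h1.trans_le h2) hα
    rwa [← Real.rpow_mul (by positivity), one_div_mul_cancel hα.ne', Real.rpow_one] at h3

lemma sum_bound {α : ℝ} (hα : 0 < α) (j : ℕ) : ∃ C > (0 : ℝ), ∀ r : ℝ, 0 < r → ∀ N : ℕ,
    ∑ b ∈ Finset.range N, (mm α b : ℝ) ^ j * Real.exp (-(mm α b * r))
      ≤ C * r ^ (-((j : ℝ) + 1 / α)) := by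
  set β := 1 / α with hβ
  have hβ0 : 0 < β := by positivity
  obtain ⟨C1, hC1, h1⟩ := rpow_le_exp (j : ℝ) (by positivity)
  obtain ⟨C2, hC2, h2⟩ := rpow_le_exp ((j : ℝ) + 2 * β) (by positivity)
  set C := 2 * C1 + 2 * 2 ^ (2 * β) * C2 with hC
  have hC0 : 0 < C := by positivity
  refine ⟨C, hC0, fun r hr N => ?_⟩
  have hr' : 0 < r ^ β := by positivity
  have hterm : ∀ b : ℕ, (mm α b : ℝ) ^ j * Real.exp (-(mm α b * r))
      ≤ C * r ^ (-(j : ℝ)) * (1 / (1 + ((b : ℝ) + 1) * r ^ β) ^ 2) := by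
    intro b
    set m : ℝ := (mm α b : ℝ) with hm
    have hm1 : 1 ≤ m := by rw [hm]; exact_mod_cast mm_pos hα b
    have hm0 : 0 < m := by linarith
    set y := m * r with hy
    have hy0 : 0 < y := by positivity
    have hb : ((b : ℝ) + 1) * r ^ β ≤ (2 * y) ^ β := by
      have h3 := le_mm hα b
      have h4 : (b : ℝ) + 1 ≤ (2 * m) ^ β := by
        have := Real.rpow_le_rpow (by positivity) h3 hβ0.le
        rwa [← Real.rpow_mul (by positivity), hβ, mul_one_div_cancel hα.ne', Real.rpow_one] at this
      rw [hy, ← mul_assoc, Real.mul_rpow (by positivity) hr.le]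
      gcongr
    have hsq : (1 + ((b : ℝ) + 1) * r ^ β) ^ 2 ≤ 2 + 2 * (2 ^ (2 * β) * y ^ (2 * β)) := by
      have e : 2 ^ (2 * β) * y ^ (2 * β) = ((2 * y) ^ β) ^ 2 := by
        rw [← Real.mul_rpow (by norm_num) hy0.le, ← Real.rpow_natCast, ← Real.rpow_mul (by positivity)]
        congr 1; push_cast; ring
      rw [e]
      have h5 : (1 + ((b : ℝ) + 1) * r ^ β) ^ 2 ≤ (1 + (2 * y) ^ β) ^ 2 := by gcongr
      nlinarith [sq_nonneg (1 - (2 * y) ^ β)]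
    have hmain : y ^ j * (1 + ((b : ℝ) + 1) * r ^ β) ^ 2 ≤ C * Real.exp y := by
      have h6 := h1 y hy0.le
      have h7 := h2 y hy0.le
      rw [Real.rpow_add hy0] at h7
      rw [Real.rpow_natCast] at h6 h7
      calc y ^ j * (1 + ((b : ℝ) + 1) * r ^ β) ^ 2
          ≤ y ^ j * (2 + 2 * (2 ^ (2 * β) * y ^ (2 * β))) := by gcongr
        _ = 2 * y ^ j + 2 * 2 ^ (2 * β) * (y ^ j * y ^ (2 * β)) := by ring
        _ ≤ 2 * (C1 * Real.exp y) + 2 * 2 ^ (2 * β) * (C2 * Real.exp y) := by gcongr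
        _ = C * Real.exp y := by rw [hC]; ring
    have hmj : m ^ j = y ^ j * r ^ (-(j : ℝ)) := by
      rw [Real.rpow_neg hr.le, Real.rpow_natCast, hy, mul_pow]
      field_simp
    rw [hmj, mul_one_div, le_div_iff₀ (by positivity), Real.exp_neg]
    have hrj : 0 < r ^ (-(j : ℝ)) := by positivity
    calc y ^ j * r ^ (-(j : ℝ)) * (Real.exp y)⁻¹ * (1 + ((b : ℝ) + 1) * r ^ β) ^ 2
        = (y ^ j * (1 + ((b : ℝ) + 1) * r ^ β) ^ 2) * (r ^ (-(j : ℝ)) * (Real.exp y)⁻¹) := by ring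
      _ ≤ (C * Real.exp y) * (r ^ (-(j : ℝ)) * (Real.exp y)⁻¹) := by gcongr
      _ = C * r ^ (-(j : ℝ)) := by
        have := (Real.exp_pos y).ne'
        field_simp
  calc _ ≤ ∑ b ∈ Finset.range N, C * r ^ (-(j : ℝ)) * (1 / (1 + ((b : ℝ) + 1) * r ^ β) ^ 2) :=
        Finset.sum_le_sum (fun b _ => hterm b)
    _ = C * r ^ (-(j : ℝ)) * ∑ b ∈ Finset.range N, (1 / (1 + ((b : ℝ) + 1) * r ^ β) ^ 2) := by
        rw [Finset.mul_sum]
    _ ≤ C * r ^ (-(j : ℝ)) * (1 / r ^ β) := by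
        gcongr
        exact sum_tele _ hr' N
    _ = _ := by
        rw [neg_add, Real.rpow_add hr, Real.rpow_neg hr.le β, one_div]
        ring

lemma summable_bound {α : ℝ} (hα : 0 < α) (j : ℕ) {r : ℝ} (hr : 0 < r) :
    Summable (fun b : ℕ => (mm α b : ℝ) ^ j * Real.exp (-(mm α b * r))) := by
  obtain ⟨C, _, h⟩ := sum_bound hα j
  exact summable_of_sum_range_le (fun b => by positivity) (h r hr)

/-- truncated weights -/
noncomputable def ww (α r : ℝ) (b : ℕ) : ℝ :=
  if (mm α b : ℝ) * r ≤ 1 then (mm α b : ℝ) ^ 2 / 96 else 0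

lemma ww_nonneg (α r : ℝ) (b : ℕ) : 0 ≤ ww α r b := by
  unfold ww; split_ifs <;> positivity

lemma W_bound {α : ℝ} (hα : 0 < α) (hα1 : α < 1) : ∃ c > (0 : ℝ), ∃ r₀ > (0 : ℝ),
    ∀ r : ℝ, 0 < r → r ≤ r₀ → ∃ N₀ : ℕ, ∀ N ≥ N₀,
      c * r ^ (-(2 + 1 / α)) ≤ ∑ b ∈ Finset.range N, ww α r b := by
  set β := 1 / α with hβ
  have hβ0 : 0 < β := by positivity
  refine ⟨1 / (16 * 96 * 4), by norm_num, (1 / 8 : ℝ) ^ (1 / β), by positivity, ?_⟩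
  intro r hr hr0
  set R := r ^ (-β) with hR
  have hR0 : 0 < R := by positivity
  have hR8 : 8 ≤ R := by
    have h1 : r ^ β ≤ ((1 / 8 : ℝ) ^ (1 / β)) ^ β := Real.rpow_le_rpow hr.le hr0 hβ0.le
    rw [← Real.rpow_mul (by norm_num), one_div_mul_cancel hβ0.ne', Real.rpow_one] at h1
    rw [hR, Real.rpow_neg hr.le, le_inv_comm₀ (by norm_num) (by positivity)]
    linarith
  have hRα : R ^ α = 1 / r := by
    rw [hR, ← Real.rpow_mul hr.le, neg_mul, hβ, one_div_mul_cancel hα.ne', Real.rpow_neg_one, one_div]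
  refine ⟨⌊R⌋₊, fun N hN => ?_⟩
  have hsub : Finset.Ico ⌈R / 2⌉₊ ⌊R⌋₊ ⊆ Finset.range N := by
    intro b hb
    rw [Finset.mem_Ico] at hb
    rw [Finset.mem_range]; omega
  have hterm : ∀ b ∈ Finset.Ico ⌈R / 2⌉₊ ⌊R⌋₊, 1 / (16 * 96 * r ^ 2) ≤ ww α r b := by
    intro b hb
    rw [Finset.mem_Ico] at hb
    have h1 : R / 2 ≤ b := (Nat.le_ceil _).trans (by exact_mod_cast hb.1)
    have h2 : (b : ℝ) + 1 ≤ R := by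
      have : ((b + 1 : ℕ) : ℝ) ≤ ⌊R⌋₊ := by exact_mod_cast hb.2
      push_cast at this
      exact this.trans (Nat.floor_le hR0.le)
    have h3 : (mm α b : ℝ) ≤ 1 / r := by
      rw [← hRα]
      exact (mm_le α b).trans (Real.rpow_le_rpow (by positivity) h2 hα.le)
    have h4 : 1 / (4 * r) ≤ mm α b := by
      have h5 := le_mm hα b
      have h6 : (R / 2) ^ α ≤ ((b : ℝ) + 1) ^ α :=
        Real.rpow_le_rpow (by positivity) (by linarith) hα.le
      rw [Real.div_rpow hR0.le (by norm_num), hRα] at h6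
      have h7 : (2 : ℝ) ^ α ≤ 2 := by
        have := Real.rpow_le_rpow_of_exponent_le (x := 2) (by norm_num) hα1.le
        rwa [Real.rpow_one] at this
      have h8 : 1 / r / 2 ≤ 1 / r / 2 ^ α := by gcongr
      have h9 : 1 / (4 * r) = 1 / r / 2 / 2 := by field_simp; norm_num
      rw [h9]; linarith
    unfold ww
    rw [if_pos (by rwa [le_div_iff₀ hr] at h3)]
    have : 1 / (16 * 96 * r ^ 2) = (1 / (4 * r)) ^ 2 / 96 := by field_simp; norm_num
    rw [this]
    gcongr
  have hcard : R / 4 ≤ ((Finset.Ico ⌈R / 2⌉₊ ⌊R⌋₊).card : ℝ) := by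
    rw [Nat.card_Ico]
    have h1 : (⌈R / 2⌉₊ : ℝ) < R / 2 + 1 := Nat.ceil_lt_add_one (by positivity)
    have h2 : R < ⌊R⌋₊ + 1 := Nat.lt_floor_add_one R
    have h3 : (⌊R⌋₊ : ℝ) - ⌈R / 2⌉₊ ≤ ((⌊R⌋₊ - ⌈R / 2⌉₊ : ℕ) : ℝ) := by
      have : ⌊R⌋₊ ≤ (⌊R⌋₊ - ⌈R / 2⌉₊) + ⌈R / 2⌉₊ := by omega
      have : (⌊R⌋₊ : ℝ) ≤ ((⌊R⌋₊ - ⌈R / 2⌉₊ : ℕ) : ℝ) + ⌈R / 2⌉₊ := by exact_mod_cast this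
      linarith
    linarith
  calc 1 / (16 * 96 * 4) * r ^ (-(2 + β)) = (R / 4) * (1 / (16 * 96 * r ^ 2)) := by
        rw [neg_add, Real.rpow_add hr, Real.rpow_neg hr.le 2, Real.rpow_two, hR]
        field_simp
    _ ≤ ((Finset.Ico ⌈R / 2⌉₊ ⌊R⌋₊).card : ℝ) * (1 / (16 * 96 * r ^ 2)) := by gcongr
    _ ≤ ∑ b ∈ Finset.Ico ⌈R / 2⌉₊ ⌊R⌋₊, ww α r b := by
        rw [← nsmul_eq_mul]
        exact Finset.card_nsmul_le_sum _ _ _ hterm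
    _ ≤ _ := Finset.sum_le_sum_of_subset_of_nonneg hsub (fun b _ _ => ww_nonneg α r b)


/-! ### The normalised factors -/

/-- success probability -/
noncomputable def pp (α r : ℝ) (b : ℕ) : ℝ := 1 / (Real.exp (mm α b * r) + 1)

/-- characteristic function of one factor -/
noncomputable def ph (α r : ℝ) (b : ℕ) (θ : ℝ) : ℂ :=
  (1 - pp α r b : ℂ) + pp α r b * Complex.exp (-(((mm α b * θ : ℝ) : ℂ) * Complex.I))

/-- variance of one factor -/
noncomputable def vv (α r : ℝ) (b : ℕ) : ℝ := pp α r b * (1 - pp α r b) * (mm α b : ℝ) ^ 2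

lemma pp_nonneg (α r : ℝ) (b : ℕ) : 0 ≤ pp α r b := by unfold pp; positivity

lemma pp_le_exp (α r : ℝ) (b : ℕ) : pp α r b ≤ Real.exp (-(mm α b * r)) := by
  unfold pp
  rw [Real.exp_neg, ← one_div]
  apply one_div_le_one_div_of_le (Real.exp_pos _)
  linarith

lemma pp_le_one (α r : ℝ) (b : ℕ) : pp α r b ≤ 1 := by
  unfold pp
  rw [div_le_one (by positivity)]
  linarith [Real.exp_pos (mm α b * r)]

lemma pp_var (α : ℝ) {r : ℝ} (hr : 0 < r) (b : ℕ) :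
    Real.exp (-(mm α b * r)) / 4 ≤ pp α r b * (1 - pp α r b) := by
  have h1 : 1 ≤ Real.exp (mm α b * r) := Real.one_le_exp (by positivity)
  unfold pp
  rw [Real.exp_neg]
  set x := Real.exp (mm α b * r)
  have e : 1 / (x + 1) * (1 - 1 / (x + 1)) = x / (x + 1) ^ 2 := by
    field_simp; ring
  rw [e, inv_eq_one_div, div_div, div_le_div_iff₀ (by positivity) (by positivity)]
  nlinarith

lemma vv_nonneg (α r : ℝ) (b : ℕ) : 0 ≤ vv α r b := by
  unfold vv
  have h1 := pp_nonneg α r b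
  have h2 := pp_le_one α r b
  have : 0 ≤ 1 - pp α r b := by linarith
  positivity

lemma vv_le (α r : ℝ) (b : ℕ) : vv α r b ≤ (mm α b : ℝ) ^ 2 * Real.exp (-(mm α b * r)) := by
  unfold vv
  rw [mul_comm]
  have h1 := pp_nonneg α r b
  have h2 := pp_le_exp α r b
  gcongr
  nlinarith

lemma exp_neg_ge_third {y : ℝ} (hy : y ≤ 1) : 1 / 3 ≤ Real.exp (-y) := by
  have h1 : Real.exp y ≤ 3 := (Real.exp_le_exp.2 hy).trans (by
    have := Real.exp_one_lt_d9; linarith)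
  rw [Real.exp_neg, one_div]
  gcongr

lemma ph_norm (α r : ℝ) (b : ℕ) (θ : ℝ) : ‖ph α r b θ‖
    ≤ Real.exp (-(pp α r b * (1 - pp α r b) * (1 - Real.cos (mm α b * θ)))) :=
  char_norm _ _

lemma ww_le_vv (α : ℝ) {r : ℝ} (hr : 0 < r) (b : ℕ) : ww α r b ≤ vv α r b / 2 := by
  unfold ww
  split_ifs with h
  · have h1 := pp_var α hr b
    have h2 := exp_neg_ge_third h
    have h3 : 1 / 12 ≤ pp α r b * (1 - pp α r b) := by linarith
    unfold vv
    have h4 : (0 : ℝ) ≤ (mm α b : ℝ) ^ 2 := by positivity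
    nlinarith
  · have := vv_nonneg α r b
    linarith

lemma ph_norm_major (α : ℝ) {r : ℝ} (hr : 0 < r) (b : ℕ) {θ : ℝ} (hθ : |θ| ≤ r) :
    ‖ph α r b θ‖ ≤ Real.exp (-(ww α r b * θ ^ 2)) := by
  refine (ph_norm α r b θ).trans (Real.exp_le_exp.2 (neg_le_neg ?_))
  have hpq : 0 ≤ pp α r b * (1 - pp α r b) :=
    mul_nonneg (pp_nonneg α r b) (by linarith [pp_le_one α r b])
  unfold ww
  split_ifs with h
  · have h1 := pp_var α hr b
    have h2 := exp_neg_ge_third h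
    have h3 : 1 / 12 ≤ pp α r b * (1 - pp α r b) := by linarith
    have hx : |(mm α b : ℝ) * θ| ≤ 1 := by
      rw [abs_mul, abs_of_nonneg (by positivity : (0 : ℝ) ≤ mm α b)]
      exact le_trans (by gcongr) h
    have h4 := Real.cos_le_one_sub_mul_cos_sq (x := mm α b * θ) (hx.trans (by linarith [Real.pi_gt_three]))
    have h5 : 1 / 8 ≤ 2 / π ^ 2 := by
      rw [div_le_div_iff₀ (by norm_num) (by positivity)]
      nlinarith [Real.pi_le_four, Real.pi_pos]
    have h6 : 1 / 8 * ((mm α b : ℝ) * θ) ^ 2 ≤ 1 - Real.cos (mm α b * θ) := by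
      have : 1 / 8 * ((mm α b : ℝ) * θ) ^ 2 ≤ 2 / π ^ 2 * ((mm α b : ℝ) * θ) ^ 2 := by gcongr
      linarith
    calc (mm α b : ℝ) ^ 2 / 96 * θ ^ 2 = 1 / 12 * (1 / 8 * ((mm α b : ℝ) * θ) ^ 2) := by ring
      _ ≤ _ := by gcongr
  · have := Real.cos_le_one (mm α b * θ)
    have h2 : 0 ≤ 1 - Real.cos (mm α b * θ) := by linarith
    rw [zero_mul]
    positivity

lemma major_bound (α : ℝ) {r : ℝ} (hr : 0 < r) (N : ℕ) {θ : ℝ} (hθ : |θ| ≤ r) :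
    ‖(∏ b ∈ Finset.range N, ph α r b θ)
        * Complex.exp (((∑ b ∈ Finset.range N, mm α b * pp α r b : ℝ) * θ : ℝ) * Complex.I)
      - (Real.exp (-((∑ b ∈ Finset.range N, vv α r b) / 2 * θ ^ 2)) : ℝ)‖
    ≤ Real.exp (-((∑ b ∈ Finset.range N, ww α r b) * θ ^ 2))
      * (Real.exp 1 * (3 * |θ| ^ 3 * ∑ b ∈ Finset.range N,
          (mm α b : ℝ) ^ 3 * Real.exp (-(mm α b * r)))) := by
  have key := prod_sub_prod_le (Finset.range N)
    (fun b => ph α r b θ * Complex.exp (pp α r b * ((mm α b * θ : ℝ) : ℂ) * Complex.I))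
    (fun b => ((Real.exp (-(pp α r b * (1 - pp α r b) * (mm α b * θ) ^ 2 / 2)) : ℝ) : ℂ))
    (fun b => Real.exp (-(ww α r b * θ ^ 2))) (Real.exp 1)
    (fun b => (Real.exp_pos _).le) ?_ ?_ ?_
  · have e1 : (∏ b ∈ Finset.range N,
        ph α r b θ * Complex.exp (pp α r b * ((mm α b * θ : ℝ) : ℂ) * Complex.I))
        = (∏ b ∈ Finset.range N, ph α r b θ)
        * Complex.exp (((∑ b ∈ Finset.range N, mm α b * pp α r b : ℝ) * θ : ℝ) * Complex.I) := by
      rw [Finset.prod_mul_distrib, ← Complex.exp_sum]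
      congr 2
      push_cast
      rw [Finset.sum_mul, Finset.sum_mul]
      exact Finset.sum_congr rfl (fun b _ => by ring)
    have e2 : (∏ b ∈ Finset.range N,
        ((Real.exp (-(pp α r b * (1 - pp α r b) * (mm α b * θ) ^ 2 / 2)) : ℝ) : ℂ))
        = ((Real.exp (-((∑ b ∈ Finset.range N, vv α r b) / 2 * θ ^ 2)) : ℝ) : ℂ) := by
      rw [← Complex.ofReal_prod, ← Real.exp_sum]
      congr 2
      rw [Finset.sum_neg_distrib, Finset.sum_div, Finset.sum_mul]
      congr 1
      refine Finset.sum_congr rfl (fun b _ => ?_)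
      unfold vv; ring
    have e3 : (∏ b ∈ Finset.range N, Real.exp (-(ww α r b * θ ^ 2)))
        = Real.exp (-((∑ b ∈ Finset.range N, ww α r b) * θ ^ 2)) := by
      rw [← Real.exp_sum, Finset.sum_neg_distrib, Finset.sum_mul]
    rw [e1, e2, e3] at key
    refine key.trans ?_
    gcongr
    rw [Finset.mul_sum]
    refine Finset.sum_le_sum (fun b _ => ?_)
    have hm : (0 : ℝ) ≤ mm α b := by positivity
    have hx : |(mm α b : ℝ) * θ| = mm α b * |θ| := by rw [abs_mul, abs_of_nonneg hm]
    refine (char_taylor (pp α r b) (mm α b * θ) (pp_nonneg _ _ _) (pp_le_one _ _ _) ?_).trans ?_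
    · rw [hx]
      have h1 : (mm α b : ℝ) * |θ| ≤ Real.exp (mm α b * r) := by
        have := Real.add_one_le_exp ((mm α b : ℝ) * r)
        have h2 : (mm α b : ℝ) * |θ| ≤ mm α b * r := by gcongr
        linarith
      calc pp α r b * (mm α b * |θ|) ≤ Real.exp (-(mm α b * r)) * Real.exp (mm α b * r) := by
            gcongr
            exact pp_le_exp _ _ _
        _ = 1 := by rw [← Real.exp_add]; simp
    · rw [hx]
      have := pp_le_exp α r b
      calc 3 * pp α r b * (mm α b * |θ|) ^ 3
          ≤ 3 * Real.exp (-(mm α b * r)) * (mm α b * |θ|) ^ 3 := by gcongr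
        _ = _ := by ring
  · intro b
    rw [← Real.exp_add]
    apply Real.one_le_exp
    unfold ww
    split_ifs with h
    · have h1 : (mm α b : ℝ) * |θ| ≤ 1 := le_trans (by gcongr) h
      have h2 : ((mm α b : ℝ) * |θ|) ^ 2 ≤ 1 := pow_le_one₀ (by positivity) h1
      rw [mul_pow, sq_abs] at h2
      linarith
    · simp
  · intro b
    have : ‖Complex.exp (pp α r b * ((mm α b * θ : ℝ) : ℂ) * Complex.I)‖ = 1 := by
      rw [← Complex.ofReal_mul]; exact Complex.norm_exp_ofReal_mul_I _
    simp only [norm_mul, this, mul_one]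
    exact ph_norm_major α hr b hθ
  · intro b
    rw [Complex.norm_real, Real.norm_of_nonneg (Real.exp_pos _).le]
    apply Real.exp_le_exp.2 (neg_le_neg _)
    have := ww_le_vv α hr b
    have h2 : pp α r b * (1 - pp α r b) * (mm α b * θ) ^ 2 / 2 = vv α r b / 2 * θ ^ 2 := by
      unfold vv; ring
    rw [h2]
    gcongr

lemma minor_bound {α : ℝ} (hα : 0 < α) (hα1 : α < 1) : ∃ c > (0 : ℝ),
    ∀ r : ℝ, 0 < r → r ≤ 1 → ∃ N₀ : ℕ, ∀ N ≥ N₀, ∀ θ : ℝ, r < |θ| → |θ| ≤ π →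
      ‖∏ b ∈ Finset.range N, ph α r b θ‖ ≤ Real.exp (-(c / r)) := by
  choose! bk hbk using fun (k : ℕ) (hk : 1 ≤ k) => mm_surj hα hα1 k hk
  refine ⟨Real.exp (-5) / 2, by positivity, fun r hr hr1 => ?_⟩
  set K := ⌈4 / r⌉₊ with hK
  have hK1 : 4 / r ≤ K := Nat.le_ceil _
  have hK2 : (K : ℝ) * r ≤ 5 := by
    have : (K : ℝ) < 4 / r + 1 := Nat.ceil_lt_add_one (by positivity)
    have h2 : (K : ℝ) * r ≤ (4 / r + 1) * r := by gcongr
    rw [add_mul, div_mul_cancel₀ _ hr.ne'] at h2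
    linarith
  refine ⟨(Finset.range K).sup (fun k => bk (k + 1)) + 1, fun N hN θ hθ1 hθ2 => ?_⟩
  have hinj : Set.InjOn (fun k => bk (k + 1)) (Finset.range K : Set ℕ) := by
    intro x _ y _ hxy
    have h1 := hbk (x + 1) (by omega)
    have h2 := hbk (y + 1) (by omega)
    change bk (x + 1) = bk (y + 1) at hxy
    rw [hxy] at h1
    omega
  have hsub : (Finset.range K).image (fun k => bk (k + 1)) ⊆ Finset.range N := by
    intro x hx
    rw [Finset.mem_image] at hx
    obtain ⟨k, hk, rfl⟩ := hx
    have := Finset.le_sup (f := fun k => bk (k + 1)) hk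
    rw [Finset.mem_range]
    omega
  rw [norm_prod]
  refine (Finset.prod_le_prod (fun _ _ => norm_nonneg _) (fun b _ => ph_norm α r b θ)).trans ?_
  rw [← Real.exp_sum, Finset.sum_neg_distrib]
  apply Real.exp_le_exp.2 (neg_le_neg _)
  have hnn : ∀ b, 0 ≤ pp α r b * (1 - pp α r b) * (1 - Real.cos (mm α b * θ)) := by
    intro b
    have h1 := pp_nonneg α r b
    have h2 : 0 ≤ 1 - pp α r b := by linarith [pp_le_one α r b]
    have h3 : 0 ≤ 1 - Real.cos (mm α b * θ) := by linarith [Real.cos_le_one (mm α b * θ)]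
    positivity
  refine le_trans ?_ (Finset.sum_le_sum_of_subset_of_nonneg hsub (fun b _ _ => hnn b))
  rw [Finset.sum_image hinj]
  have hθ0 : 0 < |θ| := hr.trans hθ1
  have hcos := sum_cos_le |θ| hθ0 hθ2 K
  have h2r : 2 / |θ| ≤ 2 / r := by gcongr
  have hsum : 2 / r ≤ ∑ k ∈ Finset.range K, (1 - Real.cos (((k : ℝ) + 1) * |θ|)) := by
    rw [Finset.sum_sub_distrib]
    simp only [Finset.sum_const, Finset.card_range, nsmul_eq_mul, mul_one]
    have : 4 / r = 2 / r + 2 / r := by ring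
    linarith
  calc Real.exp (-5) / 2 / r = Real.exp (-5) / 4 * (2 / r) := by ring
    _ ≤ Real.exp (-5) / 4 * ∑ k ∈ Finset.range K, (1 - Real.cos (((k : ℝ) + 1) * |θ|)) := by gcongr
    _ = ∑ k ∈ Finset.range K, Real.exp (-5) / 4 * (1 - Real.cos (((k : ℝ) + 1) * |θ|)) :=
        Finset.mul_sum _ _ _
    _ ≤ _ := by
        refine Finset.sum_le_sum (fun k hk => ?_)
        have hm := hbk (k + 1) (by omega)
        have hmR : (mm α (bk (k + 1)) : ℝ) = (k : ℝ) + 1 := by rw [hm]; push_cast; rfl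
        have h1 := pp_var α hr (bk (k + 1))
        rw [hmR] at h1 ⊢
        have h4 : Real.cos (((k : ℝ) + 1) * |θ|) = Real.cos (((k : ℝ) + 1) * θ) := by
          rw [← Real.cos_abs (((k : ℝ) + 1) * θ), abs_mul,
            abs_of_nonneg (by positivity : (0 : ℝ) ≤ (k : ℝ) + 1)]
        rw [h4]
        have h5 : 0 ≤ 1 - Real.cos (((k : ℝ) + 1) * θ) := by
          linarith [Real.cos_le_one (((k : ℝ) + 1) * θ)]
        have h6 : Real.exp (-5) ≤ Real.exp (-(((k : ℝ) + 1) * r)) := by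
          apply Real.exp_le_exp.2 (neg_le_neg _)
          refine le_trans ?_ hK2
          have : k + 1 ≤ K := by rw [Finset.mem_range] at hk; omega
          have : (k : ℝ) + 1 ≤ K := by exact_mod_cast this
          gcongr
        gcongr
        linarith


/-! ### Conversion from sums over `k` weighted by `g` to sums over parts -/

lemma g_eq_card {α : ℝ} (k : ℕ) : g α k = Nat.card (mm α ⁻¹' {k} : Set ℕ) := by
  unfold g
  have : {n : ℕ | 1 ≤ n ∧ ⌊(n : ℝ) ^ α⌋ = (k : ℤ)} = Nat.succ '' (mm α ⁻¹' {k}) := by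
    ext n
    simp only [Set.mem_ofPred_eq, Set.mem_image, Set.mem_preimage, Set.mem_singleton_iff]
    have key : ∀ b : ℕ, ⌊((b + 1 : ℕ) : ℝ) ^ α⌋ = (mm α b : ℤ) := by
      intro b
      unfold mm
      rw [Int.natCast_floor_eq_floor (by positivity)]
      push_cast; rfl
    constructor
    · rintro ⟨h1, h2⟩
      refine ⟨n - 1, ?_, by omega⟩
      obtain ⟨b, rfl⟩ : ∃ b, n = b + 1 := ⟨n - 1, by omega⟩
      rw [key b] at h2
      simpa using h2
    · rintro ⟨b, hb, rfl⟩
      refine ⟨by omega, ?_⟩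
      rw [Nat.succ_eq_add_one, key b, hb]
  rw [this, Set.ncard_image_of_injective _ Nat.succ_injective]
  rfl

lemma tsum_g {α : ℝ} (F : ℕ → ℝ) (hF : Summable (fun b => F (mm α b))) :
    ∑' k : ℕ, (g α k : ℝ) * F k = ∑' b : ℕ, F (mm α b) := by
  have h := hF.hasSum.tsum_fiberwise (mm α)
  rw [← h.tsum_eq]
  refine tsum_congr (fun k => ?_)
  have : ∀ b : (mm α ⁻¹' {k} : Set ℕ), F (mm α b) = F k := by
    rintro ⟨b, hb⟩
    simp only [Set.mem_preimage, Set.mem_singleton_iff] at hb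
    rw [hb]
  rw [tsum_congr this, tsum_const, g_eq_card, nsmul_eq_mul]

lemma summable_log {α : ℝ} (hα : 0 < α) {r : ℝ} (hr : 0 < r) :
    Summable (fun b : ℕ => Real.log (1 + Real.exp (0 - mm α b * r))) := by
  refine Summable.of_nonneg_of_le (fun b => Real.log_nonneg ?_) (fun b => ?_) (summable_bound hα 0 hr)
  · linarith [Real.exp_pos (0 - mm α b * r)]
  · rw [pow_zero, one_mul, zero_sub]
    have := Real.log_le_sub_one_of_pos (x := 1 + Real.exp (-(mm α b * r))) (by positivity)
    linarith

lemma summable_mean {α : ℝ} (hα : 0 < α) {r : ℝ} (hr : 0 < r) :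
    Summable (fun b : ℕ => (mm α b : ℝ) * pp α r b) := by
  refine Summable.of_nonneg_of_le (fun b => ?_) (fun b => ?_) (summable_bound hα 1 hr)
  · have := pp_nonneg α r b
    positivity
  · rw [pow_one]
    have := pp_le_exp α r b
    gcongr

lemma summable_vv {α : ℝ} (hα : 0 < α) {r : ℝ} (hr : 0 < r) : Summable (vv α r) :=
  Summable.of_nonneg_of_le (fun b => vv_nonneg α r b) (fun b => vv_le α r b) (summable_bound hα 2 hr)

lemma f_eq {α : ℝ} (hα : 0 < α) {r : ℝ} (hr : 0 < r) :
    f α r 0 = ∑' b : ℕ, Real.log (1 + Real.exp (0 - mm α b * r)) :=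
  tsum_g (fun k => Real.log (1 + Real.exp (0 - k * r))) (summable_log hα hr)

lemma mean_eq {α : ℝ} (hα : 0 < α) {r : ℝ} (hr : 0 < r) :
    ∑' k : ℕ, (k : ℝ) * g α k / (Real.exp (k * r) + 1) = ∑' b : ℕ, (mm α b : ℝ) * pp α r b := by
  refine Eq.trans (tsum_congr (fun k => by ring))
    (tsum_g (fun k => (k : ℝ) * (1 / (Real.exp (k * r) + 1))) (summable_mean hα hr))

lemma fpartial_eq {α : ℝ} (hα : 0 < α) {r : ℝ} (hr : 0 < r) :
    fpartial α 2 0 r 0 = ∑' b : ℕ, vv α r b := by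
  unfold fpartial
  simp only [iteratedDeriv_zero]
  set s := r / 2 with hs
  have hs0 : 0 < s := by positivity
  have hopen : IsOpen (Set.Ioi s) := isOpen_Ioi
  have hconn : IsPreconnected (Set.Ioi s) := isPreconnected_Ioi
  have hrs : r ∈ Set.Ioi s := by simp only [Set.mem_Ioi]; linarith
  have hexp : ∀ (b : ℕ) (y : ℝ), y ∈ Set.Ioi s →
      1 / (Real.exp (mm α b * y) + 1) ≤ Real.exp (-(mm α b * s)) := by
    intro b y hy
    simp only [Set.mem_Ioi] at hy
    refine (pp_le_exp α y b).trans (Real.exp_le_exp.2 (neg_le_neg ?_))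
    gcongr
  -- first derivative
  have hd1 : ∀ y ∈ Set.Ioi s,
      HasDerivAt (fun τ => ∑' b : ℕ, Real.log (1 + Real.exp (0 - mm α b * τ)))
        (∑' b : ℕ, -(mm α b : ℝ) / (Real.exp (mm α b * y) + 1)) y := by
    intro y hy
    refine hasDerivAt_tsum_of_isPreconnected (u := fun b => (mm α b : ℝ) ^ 1 * Real.exp (-(mm α b * s)))
      (g := fun b τ => Real.log (1 + Real.exp (0 - mm α b * τ)))
      (g' := fun b τ => -(mm α b : ℝ) / (Real.exp (mm α b * τ) + 1))
      (summable_bound hα 1 hs0) hopen hconn ?_ ?_ hrs (summable_log hα hr) hy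
    · intro b τ _
      have h1 : HasDerivAt (fun τ : ℝ => 0 - (mm α b : ℝ) * τ) (-(mm α b : ℝ)) τ := by
        simpa using (((hasDerivAt_id τ).const_mul (mm α b : ℝ)).const_sub 0)
      have h2 := (h1.exp.const_add 1).log (by positivity)
      refine h2.congr_deriv ?_
      rw [zero_sub, Real.exp_neg]
      have := Real.exp_pos (mm α b * τ)
      field_simp
    · intro b τ hτ
      have h0 : (0 : ℝ) < Real.exp (mm α b * τ) + 1 := by positivity
      rw [norm_div, norm_neg, Real.norm_of_nonneg (by positivity : (0 : ℝ) ≤ mm α b),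
        Real.norm_of_nonneg h0.le, pow_one, div_eq_mul_one_div]
      have := hexp b τ hτ
      gcongr
  have hd2 : HasDerivAt (fun τ => ∑' b : ℕ, -(mm α b : ℝ) / (Real.exp (mm α b * τ) + 1))
        (∑' b : ℕ, vv α r b) r := by
    refine hasDerivAt_tsum_of_isPreconnected (u := fun b => (mm α b : ℝ) ^ 2 * Real.exp (-(mm α b * s)))
      (g := fun b τ => -(mm α b : ℝ) / (Real.exp (mm α b * τ) + 1))
      (g' := fun b τ => vv α τ b)
      (summable_bound hα 2 hs0) hopen hconn ?_ ?_ hrs ?_ hrs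
    · intro b τ _
      have h1 : HasDerivAt (fun τ : ℝ => (mm α b : ℝ) * τ) (mm α b : ℝ) τ := by
        simpa using (hasDerivAt_id τ).const_mul (mm α b : ℝ)
      have h0 : Real.exp (mm α b * τ) + 1 ≠ 0 := by positivity
      have h2 := (hasDerivAt_const τ (-(mm α b : ℝ))).div (h1.exp.add_const 1) h0
      refine h2.congr_deriv ?_
      unfold vv pp
      field_simp
      ring
    · intro b τ hτ
      simp only [Set.mem_Ioi] at hτ
      rw [Real.norm_of_nonneg (vv_nonneg α τ b)]
      refine (vv_le α τ b).trans ?_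
      gcongr
    · have := (summable_mean hα hr).neg
      refine this.congr (fun b => ?_)
      unfold pp; ring
  have hev : (fun τ' : ℝ => ∑' k : ℕ, (g α k : ℝ) * Real.log (1 + Real.exp (0 - k * τ')))
      =ᶠ[nhds r] (fun τ => ∑' b : ℕ, Real.log (1 + Real.exp (0 - mm α b * τ))) := by
    filter_upwards [hopen.mem_nhds hrs] with τ hτ
    simp only [Set.mem_Ioi] at hτ
    exact f_eq hα (hs0.trans hτ)
  rw [hev.iteratedDeriv_eq 2, iteratedDeriv_succ, iteratedDeriv_one]
  have hev2 : deriv (fun τ => ∑' b : ℕ, Real.log (1 + Real.exp (0 - mm α b * τ)))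
      =ᶠ[nhds r] (fun τ => ∑' b : ℕ, -(mm α b : ℝ) / (Real.exp (mm α b * τ) + 1)) := by
    filter_upwards [hopen.mem_nhds hrs] with τ hτ
    exact (hd1 τ hτ).deriv
  rw [hev2.deriv_eq]
  exact hd2.deriv

/-! ### Counting and Fourier inversion -/

lemma mm_large {α : ℝ} (hα : 0 < α) (n : ℕ) : ∃ N₀ : ℕ, ∀ b ≥ N₀, n < mm α b := by
  obtain ⟨N, hN⟩ := exists_nat_gt (((2 : ℝ) * n) ^ (1 / α))
  refine ⟨N, fun b hb => ?_⟩
  have h1 := le_mm hα b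
  have h2 : ((2 : ℝ) * n) ^ (1 / α) < (b : ℝ) + 1 := by
    have : (N : ℝ) ≤ b := by exact_mod_cast hb
    linarith
  have h3 := Real.rpow_lt_rpow (by positivity) h2 hα
  rw [← Real.rpow_mul (by positivity), one_div_mul_cancel hα.ne', Real.rpow_one] at h3
  have : (n : ℝ) < mm α b := by linarith
  exact_mod_cast this

lemma qn_eq {α : ℝ} (n N : ℕ) (hN : ∀ b ≥ N, n < mm α b) :
    qn α n = ((Finset.range N).powerset.filter (fun A => ∑ b ∈ A, mm α b = n)).card := by
  unfold qn
  have key : ∀ b : ℕ, ⌊((b + 1 : ℕ) : ℝ) ^ α⌋ = (mm α b : ℤ) := by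
    intro b
    unfold mm
    rw [Int.natCast_floor_eq_floor (by positivity)]
    push_cast; rfl
  have hset : {A : Finset ℕ | (∀ a ∈ A, 1 ≤ a) ∧ (∑ a ∈ A, ⌊(a : ℝ) ^ α⌋) = (n : ℤ)}
      = Finset.map (addRightEmbedding 1) ''
        (((Finset.range N).powerset.filter (fun A => ∑ b ∈ A, mm α b = n) : Finset (Finset ℕ)) :
          Set (Finset ℕ)) := by
    ext A
    simp only [Set.mem_ofPred_eq, Set.mem_image, Finset.coe_filter, Finset.mem_powerset]
    have hsum : ∀ B : Finset ℕ, ∑ a ∈ B.map (addRightEmbedding 1), ⌊(a : ℝ) ^ α⌋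
        = ((∑ b ∈ B, mm α b : ℕ) : ℤ) := by
      intro B
      rw [Finset.sum_map, Nat.cast_sum]
      exact Finset.sum_congr rfl (fun b _ => key b)
    constructor
    · rintro ⟨h1, h2⟩
      have hB : (A.image (fun a => a - 1)).map (addRightEmbedding 1) = A := by
        ext a
        simp only [Finset.mem_map, Finset.mem_image, addRightEmbedding_apply]
        constructor
        · rintro ⟨_, ⟨x, hx, rfl⟩, rfl⟩
          rwa [Nat.sub_add_cancel (h1 x hx)]
        · intro ha
          exact ⟨a - 1, ⟨a, ha, rfl⟩, Nat.sub_add_cancel (h1 a ha)⟩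
      set B := A.image (fun a => a - 1)
      rw [← hB, hsum] at h2
      have h2' : ∑ b ∈ B, mm α b = n := by exact_mod_cast h2
      refine ⟨B, ⟨?_, h2'⟩, hB⟩
      intro b hb
      rw [Finset.mem_range]
      by_contra hlt
      have h3 := hN b (by omega)
      have h4 := Finset.single_le_sum (f := fun b => mm α b) (fun _ _ => Nat.zero_le _) hb
      omega
    · rintro ⟨B, ⟨h1, h2⟩, rfl⟩
      refine ⟨?_, by rw [hsum, h2]⟩
      intro a ha
      simp only [Finset.mem_map, addRightEmbedding_apply] at ha
      obtain ⟨b, _, rfl⟩ := ha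
      omega
  rw [hset, Set.ncard_image_of_injective _ (Finset.map_injective _), Set.ncard_coe_finset]

lemma integral_char (d : ℤ) :
    ∫ θ in (-π)..π, Complex.exp ((d : ℂ) * Complex.I * (θ : ℂ)) = if d = 0 then (2 * π : ℂ) else 0 := by
  split_ifs with h
  · subst h
    simp
    ring
  · have hc : (d : ℂ) * Complex.I ≠ 0 := mul_ne_zero (by exact_mod_cast h) Complex.I_ne_zero
    rw [integral_exp_mul_complex hc]
    have : Complex.exp ((d : ℂ) * Complex.I * (π : ℝ))
        = Complex.exp ((d : ℂ) * Complex.I * ((-π : ℝ) : ℂ)) := by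
      have e : (d : ℂ) * Complex.I * (π : ℝ)
          = (d : ℂ) * Complex.I * ((-π : ℝ) : ℂ) + (d : ℂ) * (2 * π * Complex.I) := by
        push_cast; ring
      rw [e, Complex.exp_add, Complex.exp_int_mul_two_pi_mul_I, mul_one]
    rw [this]; simp

lemma ph_eq (α r : ℝ) (b : ℕ) (θ : ℝ) :
    ph α r b θ = ((1 + Real.exp (0 - mm α b * r) : ℝ) : ℂ)⁻¹
      * (1 + Complex.exp (-((mm α b : ℂ) * (r + θ * Complex.I)))) := by
  have hx := Real.exp_pos (mm α b * r)
  have e1 : pp α r b = (1 + Real.exp (0 - mm α b * r))⁻¹ * Real.exp (-(mm α b * r)) := by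
    unfold pp
    rw [zero_sub, Real.exp_neg]
    field_simp
  have e2 : 1 - pp α r b = (1 + Real.exp (0 - mm α b * r))⁻¹ := by
    unfold pp
    rw [zero_sub, Real.exp_neg]
    field_simp
    ring
  have e3 : (1 - pp α r b : ℂ) = (((1 + Real.exp (0 - mm α b * r))⁻¹ : ℝ) : ℂ) := by
    rw [← e2]; push_cast; ring
  have e4 : Complex.exp (-((mm α b : ℂ) * (r + θ * Complex.I)))
      = ((Real.exp (-(mm α b * r)) : ℝ) : ℂ) * Complex.exp (-(((mm α b * θ : ℝ) : ℂ) * Complex.I)) := by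
    rw [Complex.ofReal_exp, ← Complex.exp_add]
    congr 1; push_cast; ring
  unfold ph
  rw [e3, e1, e4, Complex.ofReal_mul, Complex.ofReal_inv]
  ring

lemma fourier_inv (α r : ℝ) (n N : ℕ) :
    ∫ θ in (-π)..π, Complex.exp (((n : ℝ) * θ : ℝ) * Complex.I) * ∏ b ∈ Finset.range N, ph α r b θ
      = ((2 * π * ((Finset.range N).powerset.filter (fun A => ∑ b ∈ A, mm α b = n)).card
          * Real.exp (-(n * r)) / ∏ b ∈ Finset.range N, (1 + Real.exp (0 - mm α b * r)) : ℝ) : ℂ) := by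
  set P : ℝ := ∏ b ∈ Finset.range N, (1 + Real.exp (0 - mm α b * r)) with hP
  have h1 : ∀ θ : ℝ, Complex.exp (((n : ℝ) * θ : ℝ) * Complex.I) * ∏ b ∈ Finset.range N, ph α r b θ
      = ∑ A ∈ (Finset.range N).powerset, ((P : ℂ)⁻¹
          * Complex.exp (-(((∑ b ∈ A, mm α b : ℕ) : ℂ) * r)))
          * Complex.exp ((((n : ℤ) - ((∑ b ∈ A, mm α b : ℕ) : ℤ) : ℤ) : ℂ) * Complex.I * (θ : ℂ)) := by
    intro θ
    have : ∏ b ∈ Finset.range N, ph α r b θ = (P : ℂ)⁻¹ * ∑ A ∈ (Finset.range N).powerset,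
        Complex.exp (-(((∑ b ∈ A, mm α b : ℕ) : ℂ) * (r + θ * Complex.I))) := by
      simp_rw [ph_eq]
      rw [Finset.prod_mul_distrib, Finset.prod_one_add, Finset.prod_inv_distrib, hP,
        Complex.ofReal_prod]
      congr 1
      refine Finset.sum_congr rfl (fun A _ => ?_)
      rw [← Complex.exp_sum, Finset.sum_neg_distrib, ← Finset.sum_mul]
      push_cast; rfl
    rw [this, Finset.mul_sum, Finset.mul_sum]
    refine Finset.sum_congr rfl (fun A _ => ?_)
    rw [mul_left_comm, mul_assoc, ← Complex.exp_add, ← Complex.exp_add]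
    congr 2
    push_cast; ring
  simp_rw [h1]
  rw [intervalIntegral.integral_finsetSum]
  · simp_rw [intervalIntegral.integral_const_mul, integral_char]
    have h2 : ∀ A ∈ (Finset.range N).powerset,
        ((P : ℂ)⁻¹ * Complex.exp (-(((∑ b ∈ A, mm α b : ℕ) : ℂ) * r)))
          * (if (n : ℤ) - ((∑ b ∈ A, mm α b : ℕ) : ℤ) = 0 then (2 * π : ℂ) else 0)
        = if ∑ b ∈ A, mm α b = n then (P : ℂ)⁻¹ * Complex.exp (-((n : ℂ) * r)) * (2 * π) else 0 := by
      intro A _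
      by_cases hA : ∑ b ∈ A, mm α b = n
      · rw [if_pos hA, hA, if_pos (by ring)]
      · rw [if_neg hA, if_neg (by omega), mul_zero]
    rw [Finset.sum_congr rfl h2, ← Finset.sum_filter, Finset.sum_const, nsmul_eq_mul]
    push_cast
    ring
  · intro A _
    apply Continuous.intervalIntegrable
    fun_prop


/-! ### The saddle point estimate -/

lemma gauss3_integrable {W : ℝ} (hW : 0 < W) :
    MeasureTheory.Integrable (fun θ : ℝ => |θ| ^ 3 * Real.exp (-(W * θ ^ 2))) := by
  have h := (integrable_rpow_mul_exp_neg_mul_sq hW (s := 3) (by norm_num)).norm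
  refine h.congr (Filter.Eventually.of_forall (fun θ => ?_))
  have e : θ ^ (3 : ℝ) = θ ^ 3 := by exact_mod_cast Real.rpow_natCast θ 3
  simp only [e, norm_mul, norm_pow, Real.norm_eq_abs, Real.abs_exp, neg_mul]

lemma gauss3_integral {W : ℝ} (hW : 0 < W) :
    ∫ θ : ℝ, |θ| ^ 3 * Real.exp (-(W * θ ^ 2)) = 1 / W ^ 2 := by
  have h1 := integral_comp_abs (f := fun x => x ^ 3 * Real.exp (-(W * x ^ 2)))
  simp only [sq_abs] at h1
  rw [h1]
  have h2 := integral_rpow_mul_exp_neg_mul_rpow (p := 2) (q := 3) (b := W) (by norm_num)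
    (by norm_num) hW
  have e : ∀ x : ℝ, x ^ (3 : ℝ) * Real.exp (-W * x ^ (2 : ℝ)) = x ^ 3 * Real.exp (-(W * x ^ 2)) := by
    intro x
    have e1 : x ^ (3 : ℝ) = x ^ 3 := by exact_mod_cast Real.rpow_natCast x 3
    rw [e1, Real.rpow_two, neg_mul]
  simp_rw [e] at h2
  rw [h2]
  have e2 : ((3 : ℝ) + 1) / 2 = 2 := by norm_num
  have e3 : -((3 : ℝ) + 1) / 2 = -2 := by norm_num
  rw [e2, e3, Real.rpow_neg hW.le, Real.rpow_two, Real.Gamma_two]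
  field_simp

lemma prod_ph_norm_le_one (α r : ℝ) (N : ℕ) (θ : ℝ) :
    ‖∏ b ∈ Finset.range N, ph α r b θ‖ ≤ 1 := by
  rw [norm_prod]
  refine Finset.prod_le_one (fun _ _ => norm_nonneg _) (fun b _ => (ph_norm α r b θ).trans ?_)
  rw [Real.exp_le_one_iff, neg_nonpos]
  have h1 := pp_nonneg α r b
  have h2 : 0 ≤ 1 - pp α r b := by linarith [pp_le_one α r b]
  have h3 : 0 ≤ 1 - Real.cos (mm α b * θ) := by linarith [Real.cos_le_one (mm α b * θ)]
  positivity

lemma exp_diff (x y : ℝ) :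
    ‖Complex.exp (x * Complex.I) - Complex.exp (y * Complex.I)‖ ≤ |x - y| := by
  have e : Complex.exp (x * Complex.I) - Complex.exp (y * Complex.I)
      = Complex.exp (y * Complex.I) * (Complex.exp (Complex.I * ((x - y : ℝ) : ℂ)) - 1) := by
    rw [mul_sub, ← Complex.exp_add, mul_one]
    congr 2; push_cast; ring
  rw [e, norm_mul, Complex.norm_exp_ofReal_mul_I, one_mul]
  exact Real.norm_exp_I_mul_ofReal_sub_one_le

lemma finite_estimate (α : ℝ) {r : ℝ} (hr : 0 < r) (hr1 : r ≤ 1) (n N : ℕ) {W K δ : ℝ}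
    (hW : 0 < W) (hK0 : 0 ≤ K) (hδ0 : 0 ≤ δ)
    (hWN : W ≤ ∑ b ∈ Finset.range N, ww α r b)
    (hKN : ∑ b ∈ Finset.range N, (mm α b : ℝ) ^ 3 * Real.exp (-(mm α b * r)) ≤ K)
    (hδN : ∀ θ : ℝ, r < |θ| → |θ| ≤ π → ‖∏ b ∈ Finset.range N, ph α r b θ‖ ≤ δ) :
    ‖(∫ θ in (-π)..π, Complex.exp (((n : ℝ) * θ : ℝ) * Complex.I)
        * ∏ b ∈ Finset.range N, ph α r b θ)
      - ((√(π / ((∑ b ∈ Finset.range N, vv α r b) / 2)) : ℝ) : ℂ)‖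
    ≤ 2 * π * (|(n : ℝ) - ∑ b ∈ Finset.range N, mm α b * pp α r b| + δ)
      + (Real.exp 1 * 3 * K + 1 / r ^ 3) * (1 / W ^ 2) := by
  have hπ3 := Real.pi_gt_three
  set μ := ∑ b ∈ Finset.range N, mm α b * pp α r b with hμ
  set V := ∑ b ∈ Finset.range N, vv α r b with hV
  set ε := |(n : ℝ) - μ| with hε
  have hε0 : 0 ≤ ε := abs_nonneg _
  set Φ : ℝ → ℂ := fun θ => Complex.exp (((n : ℝ) * θ : ℝ) * Complex.I)
        * ∏ b ∈ Finset.range N, ph α r b θ with hΦ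
  have hΦc : Continuous Φ := by
    have : ∀ b, Continuous (ph α r b) := by
      intro b; unfold ph; fun_prop
    rw [hΦ]
    fun_prop
  have hWV : W ≤ V / 2 := by
    refine hWN.trans ?_
    rw [hV, Finset.sum_div]
    exact Finset.sum_le_sum (fun b _ => ww_le_vv α hr b)
  have hV2 : 0 < V / 2 := hW.trans_le hWV
  have hgi : MeasureTheory.Integrable (fun θ : ℝ => ((Real.exp (-(V / 2) * θ ^ 2) : ℝ) : ℂ)) :=
    (integrable_exp_neg_mul_sq hV2).ofReal
  have hg : ∫ θ : ℝ, ((Real.exp (-(V / 2) * θ ^ 2) : ℝ) : ℂ) = ((√(π / (V / 2)) : ℝ) : ℂ) := by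
    rw [integral_complex_ofReal, integral_gaussian]
  have hΦi : MeasureTheory.Integrable ((Set.Ioc (-π) π).indicator Φ) := by
    rw [MeasureTheory.integrable_indicator_iff measurableSet_Ioc]
    exact (hΦc.integrableOn_Icc (a := -π) (b := π)).mono_set Set.Ioc_subset_Icc_self
  have hΦint : ∫ θ in (-π)..π, Φ θ = ∫ θ, (Set.Ioc (-π) π).indicator Φ θ := by
    rw [intervalIntegral.integral_of_le (by linarith),
      MeasureTheory.integral_indicator measurableSet_Ioc]
  have hci : MeasureTheory.Integrable ((Set.Ioc (-π) π).indicator (fun _ : ℝ => ε + δ)) := by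
    rw [MeasureTheory.integrable_indicator_iff measurableSet_Ioc]
    exact (continuous_const.integrableOn_Icc (a := -π) (b := π)).mono_set Set.Ioc_subset_Icc_self
  have hcint : ∫ θ, (Set.Ioc (-π) π).indicator (fun _ : ℝ => ε + δ) θ = 2 * π * (ε + δ) := by
    rw [MeasureTheory.integral_indicator measurableSet_Ioc,
      ← intervalIntegral.integral_of_le (by linarith), intervalIntegral.integral_const, smul_eq_mul]
    ring
  set L := Real.exp 1 * 3 * K + 1 / r ^ 3 with hL
  have hG3 := (gauss3_integrable hW).const_mul L
  have hpt : ∀ θ : ℝ, ‖(Set.Ioc (-π) π).indicator Φ θ - ((Real.exp (-(V / 2) * θ ^ 2) : ℝ) : ℂ)‖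
      ≤ (Set.Ioc (-π) π).indicator (fun _ : ℝ => ε + δ) θ
        + L * (|θ| ^ 3 * Real.exp (-(W * θ ^ 2))) := by
    intro θ
    have hgp := Real.exp_pos (-(W * θ ^ 2))
    have hθ3 : 0 ≤ |θ| ^ 3 := by positivity
    rcases le_or_gt |θ| r with hθ | hθ
    · -- central range
      have hmem : θ ∈ Set.Ioc (-π) π := by
        have := abs_le.1 hθ
        constructor <;> linarith
      rw [Set.indicator_of_mem hmem, Set.indicator_of_mem hmem]
      have hmaj := major_bound α hr N hθ
      rw [← hμ, ← hV] at hmaj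
      have hsplit : Φ θ - ((Real.exp (-(V / 2) * θ ^ 2) : ℝ) : ℂ)
          = (∏ b ∈ Finset.range N, ph α r b θ) * (Complex.exp (((n : ℝ) * θ : ℝ) * Complex.I)
              - Complex.exp ((μ * θ : ℝ) * Complex.I))
            + ((∏ b ∈ Finset.range N, ph α r b θ) * Complex.exp ((μ * θ : ℝ) * Complex.I)
              - ((Real.exp (-(V / 2 * θ ^ 2)) : ℝ) : ℂ)) := by
        rw [hΦ, neg_mul]; ring
      rw [hsplit]
      refine (norm_add_le _ _).trans (add_le_add ?_ ?_)
      · rw [norm_mul]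
        have h1 := prod_ph_norm_le_one α r N θ
        have h2 := exp_diff ((n : ℝ) * θ) (μ * θ)
        rw [← sub_mul, abs_mul, ← hε] at h2
        have h3 : ε * |θ| ≤ ε * 1 := by gcongr; linarith
        calc _ ≤ 1 * (ε * |θ|) := by gcongr
          _ ≤ ε + δ := by linarith
      · refine hmaj.trans ?_
        have h1 : Real.exp (-((∑ b ∈ Finset.range N, ww α r b) * θ ^ 2)) ≤ Real.exp (-(W * θ ^ 2)) := by
          apply Real.exp_le_exp.2 (neg_le_neg _)
          gcongr
        have h2 : 0 ≤ 1 / r ^ 3 := by positivity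
        have h4 : 0 ≤ ∑ b ∈ Finset.range N, (mm α b : ℝ) ^ 3 * Real.exp (-(mm α b * r)) :=
          Finset.sum_nonneg (fun b _ => by positivity)
        calc _ ≤ Real.exp (-(W * θ ^ 2)) * (Real.exp 1 * (3 * |θ| ^ 3 * K)) := by gcongr
          _ = (Real.exp 1 * 3 * K) * (|θ| ^ 3 * Real.exp (-(W * θ ^ 2))) := by ring
          _ ≤ L * (|θ| ^ 3 * Real.exp (-(W * θ ^ 2))) := by
            gcongr
            linarith
    · -- outside
      have h1 : ‖(Set.Ioc (-π) π).indicator Φ θ‖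
          ≤ (Set.Ioc (-π) π).indicator (fun _ : ℝ => ε + δ) θ := by
        by_cases hmem : θ ∈ Set.Ioc (-π) π
        · rw [Set.indicator_of_mem hmem, Set.indicator_of_mem hmem, hΦ]
          simp only [norm_mul, Complex.norm_exp_ofReal_mul_I, one_mul]
          have := hδN θ hθ (abs_le.2 ⟨hmem.1.le, hmem.2⟩)
          linarith
        · rw [Set.indicator_of_notMem hmem, Set.indicator_of_notMem hmem, norm_zero]
      refine (norm_sub_le _ _).trans (add_le_add h1 ?_)
      rw [Complex.norm_real, Real.norm_of_nonneg (Real.exp_pos _).le]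
      have h2 : Real.exp (-(V / 2) * θ ^ 2) ≤ Real.exp (-(W * θ ^ 2)) := by
        rw [neg_mul]
        apply Real.exp_le_exp.2 (neg_le_neg _)
        gcongr
      have h3 : 1 ≤ L * |θ| ^ 3 := by
        have h4 : 1 ≤ 1 / r ^ 3 * |θ| ^ 3 := by
          rw [one_div_mul_eq_div, one_le_div (by positivity)]
          gcongr
        have h5 : 0 ≤ Real.exp 1 * 3 * K * |θ| ^ 3 := by positivity
        rw [hL, add_mul]; linarith
      calc _ ≤ 1 * Real.exp (-(W * θ ^ 2)) := by rw [one_mul]; exact h2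
        _ ≤ (L * |θ| ^ 3) * Real.exp (-(W * θ ^ 2)) := by gcongr
        _ = _ := by ring
  have hfin := MeasureTheory.norm_integral_le_of_norm_le (hci.add hG3)
    (Filter.Eventually.of_forall hpt)
  rw [MeasureTheory.integral_sub hΦi hgi, hg, ← hΦint] at hfin
  refine hfin.trans (le_of_eq ?_)
  have := MeasureTheory.integral_add hci hG3
  simp only [Pi.add_apply]
  rw [this, hcint, MeasureTheory.integral_const_mul, gauss3_integral hW]

lemma saddle {α : ℝ} (hα : 0 < α) {r : ℝ} (hr : 0 < r) (hr1 : r ≤ 1) (n : ℕ)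
    (hn : (n : ℝ) = ∑' b : ℕ, (mm α b : ℝ) * pp α r b) {W K δ : ℝ}
    (hW : 0 < W) (hK0 : 0 ≤ K) (hδ0 : 0 ≤ δ)
    (hWN : ∃ N₀ : ℕ, ∀ N ≥ N₀, W ≤ ∑ b ∈ Finset.range N, ww α r b)
    (hKN : ∀ N, ∑ b ∈ Finset.range N, (mm α b : ℝ) ^ 3 * Real.exp (-(mm α b * r)) ≤ K)
    (hδN : ∃ N₀ : ℕ, ∀ N ≥ N₀, ∀ θ : ℝ, r < |θ| → |θ| ≤ π →
      ‖∏ b ∈ Finset.range N, ph α r b θ‖ ≤ δ) :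
    0 < ∑' b, vv α r b ∧
    |2 * π * qn α n * Real.exp (-(n * r)) / Real.exp (f α r 0)
      - √(π / ((∑' b, vv α r b) / 2))| ≤
      2 * π * δ + (Real.exp 1 * 3 * K + 1 / r ^ 3) * (1 / W ^ 2) := by
  obtain ⟨N1, h1⟩ := hWN
  obtain ⟨N2, h2⟩ := hδN
  obtain ⟨N3, h3⟩ := mm_large hα n
  have hVpos : 0 < ∑' b, vv α r b := by
    have hh := (summable_vv hα hr).sum_le_tsum (Finset.range N1) (fun b _ => vv_nonneg α r b)
    have h4 : ∑ b ∈ Finset.range N1, ww α r b ≤ ∑ b ∈ Finset.range N1, vv α r b :=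
      Finset.sum_le_sum (fun b _ => (ww_le_vv α hr b).trans (by linarith [vv_nonneg α r b]))
    have := h1 N1 le_rfl
    linarith
  refine ⟨hVpos, ?_⟩
  have hP : Filter.Tendsto (fun N : ℕ => ∏ b ∈ Finset.range N, (1 + Real.exp (0 - mm α b * r)))
      Filter.atTop (nhds (Real.exp (f α r 0))) := by
    rw [f_eq hα hr]
    have := (Real.continuous_exp.tendsto _).comp (summable_log hα hr).hasSum.tendsto_sum_nat
    refine this.congr (fun N => ?_)
    simp only [Function.comp]
    rw [Real.exp_sum]
    exact Finset.prod_congr rfl (fun b _ => Real.exp_log (by positivity))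
  have hμ : Filter.Tendsto (fun N : ℕ => ∑ b ∈ Finset.range N, mm α b * pp α r b)
      Filter.atTop (nhds (n : ℝ)) := by
    rw [hn]; exact (summable_mean hα hr).hasSum.tendsto_sum_nat
  have hV : Filter.Tendsto (fun N : ℕ => ∑ b ∈ Finset.range N, vv α r b)
      Filter.atTop (nhds (∑' b, vv α r b)) := (summable_vv hα hr).hasSum.tendsto_sum_nat
  have hleft : Filter.Tendsto (fun N : ℕ => |2 * π * qn α n * Real.exp (-(n * r))
        / (∏ b ∈ Finset.range N, (1 + Real.exp (0 - mm α b * r)))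
      - √(π / ((∑ b ∈ Finset.range N, vv α r b) / 2))|) Filter.atTop
      (nhds |2 * π * qn α n * Real.exp (-(n * r)) / Real.exp (f α r 0)
      - √(π / ((∑' b, vv α r b) / 2))|) := by
    refine Filter.Tendsto.abs (Filter.Tendsto.sub ?_ ?_)
    · exact tendsto_const_nhds.div hP (Real.exp_pos _).ne'
    · exact (tendsto_const_nhds.div (hV.div_const 2) (by positivity)).sqrt
  have hright : Filter.Tendsto (fun N : ℕ =>
      2 * π * (|(n : ℝ) - ∑ b ∈ Finset.range N, mm α b * pp α r b| + δ)
      + (Real.exp 1 * 3 * K + 1 / r ^ 3) * (1 / W ^ 2)) Filter.atTop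
      (nhds (2 * π * (|(n : ℝ) - n| + δ) + (Real.exp 1 * 3 * K + 1 / r ^ 3) * (1 / W ^ 2))) :=
    (((hμ.const_sub (n : ℝ)).abs.add_const δ).const_mul (2 * π)).add_const _
  rw [sub_self, abs_zero, zero_add] at hright
  refine le_of_tendsto_of_tendsto hleft hright ?_
  filter_upwards [Filter.eventually_ge_atTop N1, Filter.eventually_ge_atTop N2,
    Filter.eventually_ge_atTop N3] with N hN1 hN2 hN3
  have := finite_estimate α hr hr1 n N hW hK0 hδ0 (h1 N hN1) (hKN N) (h2 N hN2)
  rw [fourier_inv, ← qn_eq n N (fun b hb => h3 b (hN3.trans hb)), ← Complex.ofReal_sub,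
    Complex.norm_real, Real.norm_eq_abs] at this
  exact this


lemma r_small {α : ℝ} (hα : 0 < α) {r₀ : ℝ} (hr₀ : 0 < r₀) :
    ∃ n₀ : ℕ, ∀ n : ℕ, n₀ ≤ n → ∀ r : ℝ, 0 < r →
      (n : ℝ) = ∑' b : ℕ, (mm α b : ℝ) * pp α r b → r ≤ r₀ := by
  obtain ⟨C, hC, h⟩ := sum_bound hα 1
  obtain ⟨n₀, hn₀⟩ := exists_nat_gt (C * r₀ ^ (-(((1 : ℕ) : ℝ) + 1 / α)))
  refine ⟨n₀, fun n hn r hr he => ?_⟩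
  by_contra hlt
  push Not at hlt
  have h1 : (n : ℝ) ≤ C * r ^ (-(((1 : ℕ) : ℝ) + 1 / α)) := by
    rw [he]
    refine Real.tsum_le_of_sum_range_le
      (fun b => mul_nonneg (by positivity) (pp_nonneg α r b)) (fun N => ?_)
    refine le_trans (Finset.sum_le_sum (fun b _ => ?_)) (h r hr N)
    rw [pow_one]
    have := pp_le_exp α r b
    gcongr
  have h2 : r ^ (-(((1 : ℕ) : ℝ) + 1 / α)) ≤ r₀ ^ (-(((1 : ℕ) : ℝ) + 1 / α)) :=
    Real.rpow_le_rpow_of_nonpos hr₀ hlt.le (by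
      have : 0 < ((1 : ℕ) : ℝ) + 1 / α := by positivity
      linarith)
  have h3 : (n₀ : ℝ) ≤ n := by exact_mod_cast hn
  have h4 := mul_le_mul_of_nonneg_left h2 hC.le
  linarith

lemma main_error {α : ℝ} (hα : 0 < α) (hα1 : α < 1) : ∃ C > (0 : ℝ), ∃ n₀ : ℕ, ∀ n : ℕ, n₀ ≤ n →
    ∀ r : ℝ, 0 < r → (n : ℝ) = ∑' b : ℕ, (mm α b : ℝ) * pp α r b →
    r ≤ 1 ∧ 0 < ∑' b, vv α r b ∧
    |2 * π * qn α n * Real.exp (-(n * r)) / Real.exp (f α r 0)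
      - √(π / ((∑' b, vv α r b) / 2))| ≤ C * r ^ (1 + 1 / α) := by
  obtain ⟨C3, hC3, h3⟩ := sum_bound hα 3
  obtain ⟨cW, hcW, rW, hrW, hW⟩ := W_bound hα hα1
  obtain ⟨c, hc, hmin⟩ := minor_bound hα hα1
  obtain ⟨n₀, hn₀⟩ := r_small hα (lt_min hrW one_pos)
  set β := 1 / α with hβ
  have hβ0 : 0 < β := by positivity
  obtain ⟨C5, hC5, h5⟩ := rpow_le_exp (1 + β) (by positivity)
  refine ⟨2 * π * (C5 * c ^ (-(1 + β))) + (Real.exp 1 * 3 * C3 + 1) * (1 / cW ^ 2),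
    by positivity, n₀, fun n hn r hr he => ?_⟩
  have hrmin := hn₀ n hn r hr he
  have hr1 : r ≤ 1 := hrmin.trans (min_le_right _ _)
  have hrr : r ≤ rW := hrmin.trans (min_le_left _ _)
  have hs := saddle hα hr hr1 n he (W := cW * r ^ (-(2 + β)))
    (K := C3 * r ^ (-(((3 : ℕ) : ℝ) + β))) (δ := Real.exp (-(c / r)))
    (by positivity) (by positivity) (Real.exp_pos _).le (hW r hr hrr) (h3 r hr) (hmin r hr hr1)
  refine ⟨hr1, hs.1, hs.2.trans ?_⟩
  have hδ : Real.exp (-(c / r)) ≤ C5 * c ^ (-(1 + β)) * r ^ (1 + β) := by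
    have h6 := h5 (c / r) (by positivity)
    rw [Real.div_rpow hc.le hr.le] at h6
    have hx := Real.exp_pos (c / r)
    rw [Real.exp_neg, Real.rpow_neg hc.le]
    have hcp : 0 < c ^ (1 + β) := by positivity
    have hrp : 0 < r ^ (1 + β) := by positivity
    rw [div_le_iff₀ hrp] at h6
    rw [inv_le_iff_one_le_mul₀ hx]
    have : C5 * (c ^ (1 + β))⁻¹ * r ^ (1 + β) * Real.exp (c / r)
        = (C5 * Real.exp (c / r) * r ^ (1 + β)) / c ^ (1 + β) := by
      field_simp
    rw [this, le_div_iff₀ hcp, one_mul]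
    exact h6
  have hWe : 1 / (cW * r ^ (-(2 + β))) ^ 2 = 1 / cW ^ 2 * r ^ (2 * (2 + β)) := by
    rw [mul_pow, ← Real.rpow_natCast (r ^ (-(2 + β))) 2, ← Real.rpow_mul hr.le]
    have : -(2 + β) * ((2 : ℕ) : ℝ) = -(2 * (2 + β)) := by push_cast; ring
    rw [this, Real.rpow_neg hr.le]
    have : 0 < r ^ (2 * (2 + β)) := by positivity
    field_simp
  have hr3 : 1 / r ^ 3 ≤ r ^ (-(((3 : ℕ) : ℝ) + β)) := by
    have : 1 / r ^ 3 = r ^ (-((3 : ℕ) : ℝ)) := by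
      rw [Real.rpow_neg hr.le, Real.rpow_natCast, one_div]
    rw [this]
    exact Real.rpow_le_rpow_of_exponent_ge hr hr1 (by linarith)
  have hprod : r ^ (-(((3 : ℕ) : ℝ) + β)) * r ^ (2 * (2 + β)) = r ^ (1 + β) := by
    rw [← Real.rpow_add hr]; congr 1; push_cast; ring
  rw [hWe]
  calc _ ≤ 2 * π * (C5 * c ^ (-(1 + β)) * r ^ (1 + β))
        + (Real.exp 1 * 3 * (C3 * r ^ (-(((3 : ℕ) : ℝ) + β))) + r ^ (-(((3 : ℕ) : ℝ) + β)))
          * (1 / cW ^ 2 * r ^ (2 * (2 + β))) := by gcongr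
    _ = 2 * π * (C5 * c ^ (-(1 + β))) * r ^ (1 + β)
        + (Real.exp 1 * 3 * C3 + 1) * (1 / cW ^ 2)
          * (r ^ (-(((3 : ℕ) : ℝ) + β)) * r ^ (2 * (2 + β))) := by ring
    _ = _ := by rw [hprod]; ring


/-- Asymptotic formula for `q(n)` (Equation (11)): if `r = r_n > 0` satisfies
`n = ∑_{k≥1} k g(k)/(e^{kr}+1)`, then
`q(n) = e^{nr+f(r,0)}/(√(2π) B)·(1 + O(r^{2β/7}))` with `B² = f''_{20}(r,0)`. -/
theorem qn_asymptotic (α β : ℝ) (hα : 0 < α ∧ α < 1) (hβ : β = 1 / α) :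
    ∃ C > (0:ℝ), ∃ n₀ : ℕ, ∀ n : ℕ, n₀ ≤ n → ∀ r : ℝ, 0 < r →
      (n : ℝ) = (∑' k : ℕ, (k : ℝ) * g α k / (Real.exp (k * r) + 1)) →
      ∃ E : ℝ,
        (qn α n : ℝ)
          = Real.exp ((n : ℝ) * r + f α r 0)
            / (Real.sqrt (2 * π) * Real.sqrt (fpartial α 2 0 r 0)) * (1 + E) ∧
        |E| ≤ C * r ^ (2 * β / 7) := by

  obtain ⟨hα0, hα1⟩ := hα
  obtain ⟨C, hC, n₀, hmain⟩ := main_error hα0 hα1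
  obtain ⟨C2, hC2, h2⟩ := sum_bound hα0 2
  rw [← hβ] at h2 hmain
  have hβ0 : 0 < β := by rw [hβ]; positivity
  refine ⟨√C2 * C, by positivity, n₀, fun n hn r hr he => ?_⟩
  rw [mean_eq hα0 hr] at he
  obtain ⟨hr1, hV, hE⟩ := hmain n hn r hr he
  rw [fpartial_eq hα0 hr]
  set V := ∑' b, vv α r b with hVdef
  have hVle : V ≤ C2 * r ^ (-(((2 : ℕ) : ℝ) + β)) := by
    refine Real.tsum_le_of_sum_range_le (fun b => vv_nonneg α r b) (fun N => ?_)
    exact (Finset.sum_le_sum (fun b _ => vv_le α r b)).trans (h2 r hr N)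
  have hsV : √V ≤ √C2 * r ^ (-(1 + β / 2)) := by
    have h3 : √V ≤ √(C2 * r ^ (-(((2 : ℕ) : ℝ) + β))) := Real.sqrt_le_sqrt hVle
    have h4 : √(r ^ (-(((2 : ℕ) : ℝ) + β))) = r ^ (-(1 + β / 2)) := by
      rw [Real.sqrt_eq_rpow, ← Real.rpow_mul hr.le]
      congr 1; push_cast; ring
    rwa [Real.sqrt_mul hC2.le, h4] at h3
  have hsV0 : 0 < √V := Real.sqrt_pos.2 hV
  have hs2 : 0 < √(2 * π) := Real.sqrt_pos.2 (by positivity)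
  have hs2sq : √(2 * π) * √(2 * π) = 2 * π := Real.mul_self_sqrt (by positivity)
  have hs2one : 1 ≤ √(2 * π) := by
    rw [Real.one_le_sqrt]; linarith [Real.pi_gt_three]
  have hG : √(π / (V / 2)) = √(2 * π) / √V := by
    rw [← Real.sqrt_div (by positivity)]
    congr 1; field_simp
  rw [hG] at hE
  set X : ℝ := Real.exp ((n : ℝ) * r + f α r 0) with hX
  have hX0 : 0 < X := Real.exp_pos _
  have hq : 2 * π * (qn α n : ℝ) * Real.exp (-(n * r)) / Real.exp (f α r 0)
      = 2 * π * (qn α n : ℝ) / X := by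
    rw [hX, Real.exp_add, Real.exp_neg]
    field_simp
  rw [hq] at hE
  refine ⟨(qn α n : ℝ) * (√(2 * π) * √V) / X - 1, ?_, ?_⟩
  · field_simp
    ring
  · have h5 : (qn α n : ℝ) * (√(2 * π) * √V) / X - 1
        = √V / √(2 * π) * (2 * π * (qn α n : ℝ) / X - √(2 * π) / √V) := by
      have e : 2 * π * (qn α n : ℝ) / X = √(2 * π) * √(2 * π) * (qn α n : ℝ) / X := by rw [hs2sq]
      rw [e]
      field_simp
    rw [h5, abs_mul, abs_of_pos (by positivity)]
    have h6 : √V / √(2 * π) ≤ √C2 * r ^ (-(1 + β / 2)) :=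
      (div_le_self hsV0.le hs2one).trans hsV
    calc _ ≤ (√C2 * r ^ (-(1 + β / 2))) * (C * r ^ (1 + β)) := by gcongr
      _ = √C2 * C * (r ^ (-(1 + β / 2)) * r ^ (1 + β)) := by ring
      _ = √C2 * C * r ^ (β / 2) := by
        rw [← Real.rpow_add hr]; congr 2; ring
      _ ≤ √C2 * C * r ^ (2 * β / 7) := by
        gcongr √C2 * C * ?_
        exact Real.rpow_le_rpow_of_exponent_ge hr hr1 (by linarith)
end

section
/- Let 0<α<1 and β:=1/α. There exist constants γ₁,γ₂>0 depending only on β such that for every real s>β one has γ₁·ζ(s−β+1) ≤ ∑_{k≥1} g(k)·k^{−s} ≤ γ₂·ζ(s−β+1), where ζ is the Riemann zeta function and the Dirichlet series D(s)=∑_{k≥1} g(k)·k^{−s} converges for s>β. -/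
open Real

lemma g_eq_aux (α β : ℝ) (hα : 0 < α ∧ α < 1) (hβ : β = 1 / α) (k : ℕ) (hk : 1 ≤ k) :
    g α k = ⌈((k : ℝ) + 1) ^ β⌉₊ - ⌈(k : ℝ) ^ β⌉₊ := by
  have h : {n : ℕ | 1 ≤ n ∧ ⌊(n : ℝ) ^ α⌋ = (k : ℤ)}
      = ((Finset.Ico ⌈(k : ℝ) ^ β⌉₊ ⌈((k : ℝ) + 1) ^ β⌉₊ : Finset ℕ) : Set ℕ) := by
    have hb : β = α⁻¹ := by rw [hβ, one_div]
    ext n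
    have hn0 : (0 : ℝ) ≤ n := Nat.cast_nonneg n
    have hk0 : (0 : ℝ) ≤ k := Nat.cast_nonneg k
    have e1 : (k : ℝ) ≤ (n : ℝ) ^ α ↔ (k : ℝ) ^ β ≤ n := by
      rw [hb]; exact (Real.rpow_inv_le_iff_of_pos hk0 hn0 hα.1).symm
    have e2 : (n : ℝ) ^ α < (k : ℝ) + 1 ↔ (n : ℝ) < ((k : ℝ) + 1) ^ β := by
      rw [hb]; exact (Real.lt_rpow_inv_iff_of_pos hn0 (by linarith) hα.1).symm
    simp only [Set.mem_setOf_eq, Finset.coe_Ico, Set.mem_Ico, Nat.ceil_le, Nat.lt_ceil,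
      Int.floor_eq_iff, Int.cast_natCast]
    rw [e1, e2]
    constructor
    · exact fun h => h.2
    · intro h
      refine ⟨?_, h⟩
      have : (0 : ℝ) < (k : ℝ) ^ β := Real.rpow_pos_of_pos (by exact_mod_cast hk) _
      have h2 : (0 : ℝ) < n := lt_of_lt_of_le this h.1
      exact_mod_cast h2
  unfold g
  rw [h, Set.ncard_coe_finset, Nat.card_Ico]

lemma g_bounds_aux (α β : ℝ) (hα : 0 < α ∧ α < 1) (hβ : β = 1 / α) (k : ℕ) (hk : 1 ≤ k) :
    1 / 2 * (k : ℝ) ^ (β - 1) ≤ g α k ∧ (g α k : ℝ) ≤ 2 * 2 ^ β * (k : ℝ) ^ (β - 1) := by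
  have hb1 : 1 ≤ β := by
    rw [hβ, le_div_iff₀ hα.1]; linarith [hα.2]
  have hk1 : (1 : ℝ) ≤ k := by exact_mod_cast hk
  have hkp : (0 : ℝ) < k := by linarith
  set P : ℝ := (k : ℝ) ^ (β - 1) with hP
  have hP1 : 1 ≤ P := Real.one_le_rpow hk1 (by linarith)
  have hkb : (k : ℝ) ^ β = k * P := by
    rw [hP, Real.rpow_sub_one hkp.ne']; field_simp
  have hL : (k : ℝ) ^ β + P ≤ ((k : ℝ) + 1) ^ β := by
    have h1 : ((k : ℝ) + 1) ^ β = (k + 1) * ((k : ℝ) + 1) ^ (β - 1) := by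
      rw [Real.rpow_sub_one (by linarith)]; field_simp
    have h2 : P ≤ ((k : ℝ) + 1) ^ (β - 1) :=
      Real.rpow_le_rpow hkp.le (by linarith) (by linarith)
    rw [h1, hkb]
    nlinarith
  have hU : ((k : ℝ) + 1) ^ β ≤ (k : ℝ) ^ β + (2 ^ β - 1) * P := by
    have ha0 : (0 : ℝ) ≤ 1 - (k : ℝ)⁻¹ := by linarith [inv_le_one_of_one_le₀ hk1]
    have hb0 : (0 : ℝ) ≤ (k : ℝ)⁻¹ := by positivity
    have m1 : (1 : ℝ) ∈ Set.Ici (0 : ℝ) := by simp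
    have m2 : (2 : ℝ) ∈ Set.Ici (0 : ℝ) := by simp
    have hc := (convexOn_rpow hb1).2 m1 m2 ha0 hb0 (by ring)
    simp only [smul_eq_mul, Real.one_rpow] at hc
    have h3 : (k : ℝ) + 1 = k * ((1 - (k : ℝ)⁻¹) * 1 + (k : ℝ)⁻¹ * 2) := by
      field_simp; ring
    have hpos : (0 : ℝ) ≤ (1 - (k : ℝ)⁻¹) * 1 + (k : ℝ)⁻¹ * 2 := by
      have : 0 < (k : ℝ)⁻¹ := by positivity
      linarith
    rw [h3, Real.mul_rpow hkp.le hpos]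
    calc (k : ℝ) ^ β * ((1 - (k : ℝ)⁻¹) * 1 + (k : ℝ)⁻¹ * 2) ^ β
        ≤ (k : ℝ) ^ β * ((1 - (k : ℝ)⁻¹) * 1 + (k : ℝ)⁻¹ * 2 ^ β) := by gcongr
      _ = (k : ℝ) ^ β + (2 ^ β - 1) * P := by
        rw [hkb]; field_simp; ring
  have a1 := Nat.le_ceil ((k : ℝ) ^ β)
  have a2 := Nat.ceil_lt_add_one (a := (k : ℝ) ^ β) (by positivity)
  have b1 := Nat.le_ceil (((k : ℝ) + 1) ^ β)
  have b2 := Nat.ceil_lt_add_one (a := ((k : ℝ) + 1) ^ β) (by positivity)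
  have hlt : ⌈(k : ℝ) ^ β⌉₊ < ⌈((k : ℝ) + 1) ^ β⌉₊ := by
    have : (⌈(k : ℝ) ^ β⌉₊ : ℝ) < ⌈((k : ℝ) + 1) ^ β⌉₊ := by linarith
    exact_mod_cast this
  have hlt' : (⌈(k : ℝ) ^ β⌉₊ : ℝ) + 1 ≤ ⌈((k : ℝ) + 1) ^ β⌉₊ := by exact_mod_cast hlt
  rw [g_eq_aux α β hα hβ k hk, Nat.cast_sub hlt.le]
  have h2 : (2 : ℝ) ≤ 2 ^ β := by
    simpa using Real.rpow_le_rpow_of_exponent_le (x := 2) (by norm_num) hb1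
  constructor
  · rcases le_total P 2 with h | h <;> linarith
  · nlinarith

/-- `D(s) = ∑_{k≥1} g(k) k^{−s} ≍ ζ(s−β+1)` for `s > β`, with constants depending
only on `β`; in particular the Dirichlet series converges for `s > β`.
(For `s > β` the argument `s − β + 1 > 1` lies in the half-plane of convergence,
where `ζ` is real, so we compare with the real part of `riemannZeta`.) -/
theorem D_asymp_zeta (α β : ℝ) (hα : 0 < α ∧ α < 1) (hβ : β = 1 / α) :
    ∃ γ₁ > (0:ℝ), ∃ γ₂ > (0:ℝ), ∀ s : ℝ, β < s →
      Summable (fun k : ℕ => (g α k : ℝ) * (k : ℝ) ^ (-s)) ∧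
      γ₁ * (riemannZeta ((s - β + 1 : ℝ) : ℂ)).re
          ≤ ∑' k : ℕ, (g α k : ℝ) * (k : ℝ) ^ (-s) ∧
      (∑' k : ℕ, (g α k : ℝ) * (k : ℝ) ^ (-s))
          ≤ γ₂ * (riemannZeta ((s - β + 1 : ℝ) : ℂ)).re := by
  refine ⟨1 / 2, by norm_num, 2 * 2 ^ β, by positivity, fun s hs => ?_⟩
  have hb1 : 1 ≤ β := by
    rw [hβ, le_div_iff₀ hα.1]; linarith [hα.2]
  set z : ℕ → ℝ := fun k => 1 / (k : ℝ) ^ (s - β + 1) with hz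
  have hzs : Summable z := Real.summable_one_div_nat_rpow.2 (by linarith)
  have hzeta : (riemannZeta ((s - β + 1 : ℝ) : ℂ)).re = ∑' k, z k := by
    rw [zeta_eq_tsum_one_div_nat_cpow (by rw [Complex.ofReal_re]; linarith)]
    have : ∀ n : ℕ, 1 / (n : ℂ) ^ (((s - β + 1 : ℝ)) : ℂ) = ((z n : ℝ) : ℂ) := by
      intro n
      simp only [hz]
      rw [Complex.ofReal_div, Complex.ofReal_cpow (Nat.cast_nonneg n)]
      simp
    rw [tsum_congr this, ← Complex.ofReal_tsum, Complex.ofReal_re]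
  have hbd : ∀ k : ℕ, 1 / 2 * z k ≤ (g α k : ℝ) * (k : ℝ) ^ (-s) ∧
      (g α k : ℝ) * (k : ℝ) ^ (-s) ≤ 2 * 2 ^ β * z k := by
    intro k
    rcases Nat.eq_zero_or_pos k with rfl | hk
    · have e1 : (0 : ℝ) ^ (-s) = 0 := Real.zero_rpow (by linarith)
      have e2 : (0 : ℝ) ^ (s - β + 1) = 0 := Real.zero_rpow (by linarith)
      simp [hz, e1, e2]
    · have hkp : (0 : ℝ) < k := by exact_mod_cast hk
      have e : z k = (k : ℝ) ^ (β - 1) * (k : ℝ) ^ (-s) := by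
        simp only [hz]
        rw [one_div, ← Real.rpow_neg hkp.le, ← Real.rpow_add hkp]
        congr 1; ring
      obtain ⟨h1, h2⟩ := g_bounds_aux α β hα hβ k hk
      have hp : 0 ≤ (k : ℝ) ^ (-s) := by positivity
      rw [e, ← mul_assoc, ← mul_assoc]
      exact ⟨mul_le_mul_of_nonneg_right h1 hp, mul_le_mul_of_nonneg_right h2 hp⟩
  have hsum : Summable (fun k : ℕ => (g α k : ℝ) * (k : ℝ) ^ (-s)) :=
    Summable.of_nonneg_of_le (fun k => by positivity) (fun k => (hbd k).2) (hzs.mul_left _)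
  refine ⟨hsum, ?_, ?_⟩
  · rw [hzeta, ← tsum_mul_left]
    exact (hzs.mul_left _).tsum_le_tsum (fun k => (hbd k).1) hsum
  · rw [hzeta, ← tsum_mul_left]
    exact hsum.tsum_le_tsum (fun k => (hbd k).2) (hzs.mul_left _)
end
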